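/- Let R = ℂ[[x,y,z,u,v]]/(x³ + y³ + z³, z² − ux − vy), a quotient of the formal power series ring in five variables over ℂ. Then the images of x and y form a Q-sequence in R, but the superheight of (x,y)R is 1: for every Noetherian commutative R-algebra S in which (x,y)S is a proper ideal, the height of (x,y)S is at most 1. -/

import Mathlib

open scoped BigOperators
open MvPowerSeries

universe u

/-- A filtration of `M` of length `h` whose factors are cyclic modules killed by `J`. -/
def HasQLFiltration (S : Type u) [CommRing S] (J : Ideal S)
    (M : Type u) [AddCommGroup M] [Module S M] (h : ℕ) : Prop :=
  ∃ c : Fin (h + 1) → Submodule S M,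
    Monotone c ∧ c 0 = ⊥ ∧ c (Fin.last h) = ⊤ ∧
    ∀ i : Fin h,
      (∃ m : M, c i.succ = c i.castSucc ⊔ Submodule.span S {m}) ∧
      ∀ a ∈ J, ∀ x ∈ c i.succ, a • x ∈ c i.castSucc

/-- The `J`-quasilength of `M`. -/
noncomputable def quasilength (S : Type u) [CommRing S] (J : Ideal S)
    (M : Type u) [AddCommGroup M] [Module S M] : ℕ∞ :=
  sInf {n : ℕ∞ | ∃ h : ℕ, n = (h : ℕ∞) ∧ HasQLFiltration S J M h}

/-- `x₁, …, x_d` is a Q-sequence in `S`. -/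
def IsQSequence {d : ℕ} {S : Type u} [CommRing S] (x : Fin d → S) : Prop :=
  Ideal.span (Set.range x) ≠ ⊤ ∧
  ∀ t : ℕ, 0 < t →
    ((t : ℕ∞) ^ d) ≤ quasilength S (Ideal.span (Set.range x))
      (S ⧸ Ideal.span (Set.range fun i => x i ^ t))

/-- The height of an ideal: the infimum of the heights of the primes containing it. -/
noncomputable def idealHeight (S : Type u) [CommRing S] (J : Ideal S) : ℕ∞ :=
  ⨅ (P : PrimeSpectrum S) (_ : J ≤ P.asIdeal), Order.height P

namespace QS

/-! ### Evaluation of power series in complete rings -/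

theorem aeval_mem_pow {σ L T : Type*} [CommRing L] [CommRing T] [Algebra L T]
    (J : Ideal T) (a : σ → T) (ha : ∀ i, a i ∈ J) (n : ℕ) (p : MvPolynomial σ L)
    (hp : p ∈ MvPolynomial.idealOfVars σ L ^ n) : MvPolynomial.aeval a p ∈ J ^ n := by
  have h1 : (MvPolynomial.idealOfVars σ L).map (MvPolynomial.aeval a : MvPolynomial σ L →ₐ[L] T) ≤ J := by
    rw [MvPolynomial.idealOfVars, Ideal.map_span, Ideal.span_le]
    rintro _ ⟨_, ⟨i, rfl⟩, rfl⟩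
    simpa using ha i
  have h2 := Ideal.mem_map_of_mem (MvPolynomial.aeval a : MvPolynomial σ L →ₐ[L] T) hp
  rw [Ideal.map_pow] at h2
  exact Ideal.pow_right_mono h1 n h2

theorem exists_eval {σ L T : Type*} [Finite σ] [CommRing L] [CommRing T] [Algebra L T]
    (J : Ideal T) [IsAdicComplete J T] (a : σ → T) (ha : ∀ i, a i ∈ J) :
    ∃ ψ : MvPowerSeries σ L →+* T, ∀ (n : ℕ) (f : MvPowerSeries σ L),
      ψ f - MvPolynomial.aeval a (truncTotal n f) ∈ J ^ n := by
  let g : (n : ℕ) → (MvPolynomial σ L ⧸ (MvPolynomial.idealOfVars σ L) ^ n) →+* T ⧸ J ^ n :=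
    fun n => Ideal.quotientMap (J ^ n) (MvPolynomial.aeval a : MvPolynomial σ L →ₐ[L] T).toRingHom
      (fun p hp => aeval_mem_pow J a ha n p hp)
  let f : (n : ℕ) → MvPowerSeries σ L →+* T ⧸ J ^ n :=
    fun n => (g n).comp (truncTotalAlgHom σ L n).toRingHom
  have hfa : ∀ n p, f n p = Ideal.Quotient.mk (J ^ n) (MvPolynomial.aeval a (truncTotal n p)) := by
    intro n p
    rfl
  have hf : ∀ {m n : ℕ} (hle : m ≤ n), (Ideal.Quotient.factorPow J hle).comp (f n) = f m := by
    intro m n hle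
    ext p
    rw [RingHom.comp_apply, hfa, hfa, Ideal.Quotient.factorPow, Ideal.Quotient.factor_mk,
      Ideal.Quotient.mk_eq_mk_iff_sub_mem, ← map_sub]
    exact aeval_mem_pow J a ha m _ (truncTotal_sub_truncTotal_mem_pow_idealOfVars hle le_rfl p)
  refine ⟨IsAdicComplete.liftRingHom J f hf, fun n p => ?_⟩
  rw [← Ideal.Quotient.mk_eq_mk_iff_sub_mem, IsAdicComplete.mk_liftRingHom, hfa]

theorem eq_zero_of_forall_mem_pow {T : Type*} [CommRing T] (J : Ideal T) [IsHausdorff J T] (w : T)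
    (h : ∀ n, w ∈ J ^ n) : w = 0 := by
  refine IsHausdorff.haus inferInstance w (I := J) fun n => ?_
  rw [SModEq.zero]
  simpa using h n

theorem eval_coe {σ L T : Type*} [Finite σ] [CommRing L] [CommRing T] [Algebra L T]
    (J : Ideal T) [IsAdicComplete J T] (a : σ → T)
    (ψ : MvPowerSeries σ L →+* T) (hψ : ∀ (n : ℕ) (f : MvPowerSeries σ L),
      ψ f - MvPolynomial.aeval a (truncTotal n f) ∈ J ^ n) (p : MvPolynomial σ L) :
    ψ (p : MvPowerSeries σ L) = MvPolynomial.aeval a p := by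
  rw [← sub_eq_zero]
  apply eq_zero_of_forall_mem_pow J
  intro n
  have h := hψ (n + p.totalDegree + 1) p
  rw [(truncTotal_coe_eq_self_iff p (by omega)).2 (by omega)] at h
  exact Ideal.pow_le_pow_right (by omega) h

theorem line_poly {L : Type*} [Field L] (l : L) (p : MvPolynomial (Fin 2) L) (n : ℕ) :
    PowerSeries.coeff n (MvPolynomial.aeval
      ![(PowerSeries.X : PowerSeries L), PowerSeries.C l * PowerSeries.X] p) =
    ∑ m ∈ Finset.HasAntidiagonal.antidiagonal n,
      MvPolynomial.coeff (Finsupp.single 0 m.1 + Finsupp.single 1 m.2) p * l ^ m.2 := by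
  induction p using MvPolynomial.induction_on' with
  | add p q hp hq =>
    simp only [map_add, hp, hq, MvPolynomial.coeff_add, add_mul, Finset.sum_add_distrib]
  | monomial s c =>
    have hs : s = Finsupp.single 0 (s 0) + Finsupp.single 1 (s 1) := by
      ext i
      fin_cases i <;> simp
    rw [MvPolynomial.aeval_monomial, Finsupp.prod_fintype _ _ (by simp)]
    have h1 : (algebraMap L (PowerSeries L)) c *
        ∏ i, (![(PowerSeries.X : PowerSeries L), PowerSeries.C l * PowerSeries.X] i) ^ (s i) =
        PowerSeries.C (c * l ^ s 1) * PowerSeries.X ^ (s 0 + s 1) := by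
      simp [Fin.prod_univ_two, PowerSeries.algebraMap_eq]
      ring
    rw [h1, PowerSeries.coeff_C_mul, PowerSeries.coeff_X_pow]
    simp only [MvPolynomial.coeff_monomial]
    by_cases hn : n = s 0 + s 1
    · rw [Finset.sum_eq_single (s 0, s 1)]
      · simp [← hs, hn]
      · rintro ⟨b1, b2⟩ hb hne
        rw [if_neg, zero_mul]
        intro h
        apply hne
        have e0 := congrArg (fun f => f 0) h
        have e1 := congrArg (fun f => f 1) h
        simp at e0 e1
        simp [e0, e1]
      · intro h
        exact absurd (Finset.HasAntidiagonal.mem_antidiagonal.2 hn.symm) h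
    · rw [if_neg hn, mul_zero, Finset.sum_eq_zero]
      rintro ⟨b1, b2⟩ hb
      rw [if_neg, zero_mul]
      intro h
      apply hn
      have e0 := congrArg (fun f => f 0) h
      have e1 := congrArg (fun f => f 1) h
      simp at e0 e1
      rw [Finset.HasAntidiagonal.mem_antidiagonal] at hb
      simp at hb
      omega

/-- restriction to the line with slope `l`. -/
theorem exists_line {L : Type*} [Field L] (l : L) :
    ∃ φ : MvPowerSeries (Fin 2) L →+* PowerSeries L,
      φ (X 0) = PowerSeries.X ∧ φ (X 1) = PowerSeries.C l * PowerSeries.X ∧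
      (∀ (c : L), φ (C c) = PowerSeries.C c) ∧
      ∀ f n, PowerSeries.coeff n (φ f) =
        ∑ m ∈ Finset.HasAntidiagonal.antidiagonal n, coeff (Finsupp.single 0 m.1 + Finsupp.single 1 m.2) f * l ^ m.2 := by
  obtain ⟨φ, hφ⟩ := exists_eval (L := L) (Ideal.span {(PowerSeries.X : PowerSeries L)})
    ![PowerSeries.X, PowerSeries.C l * PowerSeries.X] (by
      intro i
      fin_cases i
      · exact Ideal.mem_span_singleton_self _
      · exact Ideal.mul_mem_left _ _ (Ideal.mem_span_singleton_self _))
  refine ⟨φ, ?_, ?_, ?_, ?_⟩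
  · have := eval_coe _ _ φ hφ (MvPolynomial.X 0)
    simpa using this
  · have := eval_coe _ _ φ hφ (MvPolynomial.X 1)
    simpa using this
  · intro c
    have := eval_coe _ _ φ hφ (MvPolynomial.C c)
    simpa using this
  · intro f n
    have h := hφ (n + 1) f
    rw [Ideal.span_singleton_pow, Ideal.mem_span_singleton, PowerSeries.X_pow_dvd_iff] at h
    have h1 := h n (by omega)
    rw [map_sub, sub_eq_zero] at h1
    rw [h1, line_poly]
    refine Finset.sum_congr rfl fun m hm => ?_
    rw [coeff_truncTotal]
    rw [Finset.HasAntidiagonal.mem_antidiagonal] at hm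
    simp only [map_add, Finsupp.degree_single]
    omega

end QS

namespace QS

/-! ### The trace argument -/

theorem trace_contra {L ι : Type*} [Field L] [CharZero L] [Fintype ι] [DecidableEq ι] [Nonempty ι]
    (ω : L) (hω : ω ^ 2 + ω + 1 = 0)
    (Z U V : Matrix ι ι (MvPowerSeries (Fin 2) L)) (hZU : Commute Z U)
    (h3 : Z ^ 3 = (-((X 0) ^ 3 + (X 1) ^ 3) : MvPowerSeries (Fin 2) L) • 1)
    (h2 : Z ^ 2 = (X 0 : MvPowerSeries (Fin 2) L) • U + (X 1 : MvPowerSeries (Fin 2) L) • V) :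
    False := by
  set p := (U * Z).trace with hp
  have key : ∀ l : L, l ^ 3 = -1 →
      coeff (Finsupp.single 0 2 + Finsupp.single 1 0) p
      + coeff (Finsupp.single 0 1 + Finsupp.single 1 1) p * l
      + coeff (Finsupp.single 0 0 + Finsupp.single 1 2) p * l ^ 2 = 0 := by
    intro l hl
    obtain ⟨φ, h0, h1, hC, hco⟩ := exists_line l
    have hnil : IsNilpotent ((U * Z).map φ) := by
      refine ⟨3, ?_⟩
      rw [← Matrix.map_pow, hZU.symm.mul_pow, h3]
      have : φ (-((X 0) ^ 3 + (X 1) ^ 3)) = 0 := by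
        rw [map_neg, map_add, map_pow, map_pow, h0, h1, mul_pow, ← map_pow, hl]
        simp
      rw [mul_smul_comm, mul_one]
      refine Matrix.ext fun i j => ?_
      rw [Matrix.map_apply, Matrix.smul_apply, smul_eq_mul, map_mul, this, zero_mul]
      rfl
    have htr := Matrix.isNilpotent_trace_of_isNilpotent hnil
    have htr0 : φ p = 0 := by
      rw [hp, ← htr.eq_zero]
      exact AddMonoidHom.map_trace φ.toAddMonoidHom (U * Z)
    have := hco p 2
    rw [htr0, map_zero] at this
    simp [Finset.Nat.antidiagonal_succ] at this
    simp
    rw [this]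
    ring
  have hω3 : ω ^ 3 = 1 := by linear_combination (ω - 1) * hω
  have k1 := key (-1) (by norm_num)
  have k2 := key (-ω) (by linear_combination -hω3)
  have k3 := key (-ω ^ 2) (by linear_combination (-ω ^ 3 - 1) * hω3)
  have hp20 : coeff (Finsupp.single 0 2 + Finsupp.single 1 0) p = 0 := by
    have : (3 : L) * coeff (Finsupp.single 0 2 + Finsupp.single 1 0) p = 0 := by
      linear_combination k1 + k2 + k3 + (coeff (Finsupp.single 0 1 + Finsupp.single 1 1) p) * hω
        - (coeff (Finsupp.single 0 0 + Finsupp.single 1 2) p) * (hω + ω * hω3)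
    simpa using this
  have hc : (Fintype.card ι : MvPowerSeries (Fin 2) L) * (-((X 0) ^ 3 + (X 1) ^ 3))
      = X 0 * p + X 1 * (V * Z).trace := by
    have : Z ^ 3 = Z ^ 2 * Z := pow_succ _ _
    rw [h3, h2] at this
    have h := congrArg Matrix.trace this
    rw [add_mul, Matrix.trace_add, smul_mul_assoc, smul_mul_assoc, Matrix.trace_smul,
      Matrix.trace_smul, Matrix.trace_smul, Matrix.trace_one] at h
    simp only [smul_eq_mul] at h
    rw [mul_comm, h]
  have h := congrArg (coeff (Finsupp.single 0 3)) hc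
  have e1 : (Finsupp.single 0 3 : Fin 2 →₀ ℕ) = Finsupp.single 0 1 + Finsupp.single 0 2 := by
    rw [← Finsupp.single_add]
  have e2 : coeff (Finsupp.single 0 3) (X 0 * p) = 0 := by
    rw [X_def, e1, coeff_add_monomial_mul]
    simp at hp20
    simp [hp20]
  have e3 : coeff (Finsupp.single 0 3) (X 1 * (V * Z).trace) = 0 := by
    rw [X_def, coeff_monomial_mul, if_neg]
    intro hle
    have := hle 1
    simp at this
  rw [map_add, e2, e3] at h
  have e4 : (Fintype.card ι : MvPowerSeries (Fin 2) L) = C (Fintype.card ι : L) := by simp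
  rw [e4, coeff_C_mul] at h
  have e5 : coeff (Finsupp.single 0 3) (-((X 0) ^ 3 + (X 1) ^ 3) : MvPowerSeries (Fin 2) L) = -1 := by
    rw [map_neg, map_add, coeff_X_pow, coeff_X_pow, if_pos rfl, if_neg]
    · simp
    · intro h
      have := congrArg (fun f => f 0) h
      simp at this
  rw [e5] at h
  simp at h

end QS

namespace QS

/-! ### Duals of finite modules over a two-dimensional regular ring -/

theorem exists_dual_ne_zero {B N : Type*} [CommRing B] [IsDomain B] [AddCommGroup N] [Module B N]
    [Module.Finite B N] (e : N) (he : ∀ b : B, b • e = 0 → b = 0) :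
    ∃ f : Module.Dual B N, f e ≠ 0 := by
  let K := FractionRing B
  let NK := LocalizedModule (nonZeroDivisors B) N
  let ι : N →ₗ[B] NK := LocalizedModule.mkLinearMap (nonZeroDivisors B) N
  have hι : ι e ≠ 0 := by
    intro h
    have h2 := (IsLocalizedModule.eq_zero_iff (nonZeroDivisors B) ι).1 h
    obtain ⟨s, hs⟩ := h2
    exact nonZeroDivisors.coe_ne_zero s (he _ hs)
  obtain ⟨g, hg⟩ := Module.Projective.exists_dual_ne_zero K hι
  obtain ⟨s, hs⟩ := (Module.Finite.fg_top : (⊤ : Submodule B N).FG)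
  let G : N →ₗ[B] K := (g.restrictScalars B) ∘ₗ ι
  classical
  obtain ⟨b, hb⟩ := IsLocalization.exist_integer_multiples_of_finset (nonZeroDivisors B) (s.image G)
  have hall : ∀ n : N, ∃ c : B, algebraMap B K c = (b : B) • G n := by
    intro n
    have hn : n ∈ Submodule.span B (s : Set N) := by rw [hs]; trivial
    induction hn using Submodule.span_induction with
    | mem x hx =>
      obtain ⟨c, hc⟩ := hb (G x) (Finset.mem_image_of_mem _ hx)
      exact ⟨c, hc⟩
    | zero => exact ⟨0, by simp⟩
    | add x y _ _ hx hy =>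
      obtain ⟨c, hc⟩ := hx
      obtain ⟨d, hd⟩ := hy
      exact ⟨c + d, by rw [map_add, hc, hd, map_add, smul_add]⟩
    | smul a x _ hx =>
      obtain ⟨c, hc⟩ := hx
      exact ⟨a * c, by rw [map_mul, hc, map_smul, smul_comm, Algebra.smul_def a]⟩
  choose c hc using hall
  have hinj : Function.Injective (algebraMap B K) := IsFractionRing.injective B K
  refine ⟨{ toFun := c, map_add' := ?_, map_smul' := ?_ }, ?_⟩
  · intro x y
    apply hinj
    rw [map_add, hc, hc, hc, map_add, smul_add]
  · intro a x
    apply hinj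
    rw [hc, RingHom.id_apply, smul_eq_mul, map_mul, hc, map_smul, smul_comm, Algebra.smul_def a]
  · intro h0
    change c e = 0 at h0
    have h1 := hc e
    rw [h0, map_zero, Algebra.smul_def] at h1
    rcases mul_eq_zero.1 h1.symm with h | h
    · exact nonZeroDivisors.coe_ne_zero b (hinj (by rw [h, map_zero]))
    · exact hg h

theorem dual_free {B N : Type*} [CommRing B] [IsDomain B] [IsNoetherianRing B]
    [AddCommGroup N] [Module B N] [Module.Finite B N] (q : B) (hq : Prime q)
    (hj : q ∈ (⊥ : Ideal B).jacobson) [IsPrincipalIdealRing (B ⧸ Ideal.span {q})] :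
    Module.Free B (Module.Dual B N) := by
  have : (Ideal.span {q}).IsPrime := (Ideal.span_singleton_prime hq.ne_zero).2 hq
  have : Module.Finite B (Module.Dual B N) := by unfold Module.Dual; infer_instance
  have : Module.FinitePresentation B (Module.Dual B N) := Module.finitePresentation_of_finite B _
  rw [← Module.free_quotSMulTop_iff_free _ _ hj]
  · have : Module.Finite (B ⧸ Ideal.span {q}) (QuotSMulTop q (Module.Dual B N)) :=
      Module.Finite.of_restrictScalars_finite B _ _
    have : Module.IsTorsionFree (B ⧸ Ideal.span {q}) (QuotSMulTop q (Module.Dual B N)) := by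
      constructor
      intro r hr
      obtain ⟨r, rfl⟩ := Ideal.Quotient.mk_surjective r
      have hr0 : ¬ q ∣ r := by
        intro h
        rw [← Ideal.mem_span_singleton, ← Ideal.Quotient.eq_zero_iff_mem] at h
        rw [h] at hr
        exact hr.ne_zero rfl
      rw [isSMulRegular_iff_right_eq_zero_of_smul]
      intro m hm
      obtain ⟨f, rfl⟩ := Submodule.Quotient.mk_surjective _ m
      change (Submodule.Quotient.mk (r • f) : QuotSMulTop q (Module.Dual B N)) = 0 at hm
      rw [Submodule.Quotient.mk_eq_zero, Submodule.mem_smul_pointwise_iff_exists] at hm ⊢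
      obtain ⟨g, -, hg⟩ := hm
      have hdiv : ∀ n, ∃ c, f n = q * c := by
        intro n
        have h := LinearMap.congr_fun hg n
        simp only [LinearMap.smul_apply, smul_eq_mul] at h
        exact (hq.dvd_or_dvd (Dvd.intro _ h)).resolve_left hr0
      choose c hc using hdiv
      refine ⟨{ toFun := c, map_add' := ?_, map_smul' := ?_ }, trivial, ?_⟩
      · intro a b
        apply mul_left_cancel₀ hq.ne_zero
        rw [mul_add, ← hc, ← hc, ← hc, map_add]
      · intro a b
        apply mul_left_cancel₀ hq.ne_zero
        simp only [RingHom.id_apply, smul_eq_mul]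
        rw [← hc, mul_left_comm, ← hc, map_smul, smul_eq_mul]
      · ext n
        simp [hc]
    infer_instance
  · rw [isSMulRegular_iff_right_eq_zero_of_smul]
    intro f hf
    ext n
    have h := LinearMap.congr_fun hf n
    simpa [hq.ne_zero] using h

theorem line_zero {L : Type*} [Field L] : ∃ φ : MvPowerSeries (Fin 2) L →+* PowerSeries L,
    Function.Surjective φ ∧ RingHom.ker φ = Ideal.span {X 1} := by
  obtain ⟨φ, h0, h1, hC, hco⟩ := exists_line (0 : L)
  have hco' : ∀ f n, PowerSeries.coeff n (φ f) = coeff (Finsupp.single 0 n) f := by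
    intro f n
    rw [hco, Finset.sum_eq_single (n, 0)]
    · simp
    · rintro ⟨a, b⟩ hab hne
      rw [zero_pow, mul_zero]
      rintro rfl
      simp at hab
      exact hne (by simp [hab])
    · intro h
      simp at h
  refine ⟨φ, ?_, ?_⟩
  · intro g
    refine ⟨(fun m => PowerSeries.coeff (m 0) g : (Fin 2 →₀ ℕ) → L), ?_⟩
    ext n
    refine (hco' _ _).trans ?_
    change PowerSeries.coeff ((Finsupp.single 0 n : Fin 2 →₀ ℕ) 0) g = _
    simp
  · ext f
    rw [RingHom.mem_ker, Ideal.mem_span_singleton, X_dvd_iff, PowerSeries.ext_iff]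
    constructor
    · intro h m hm
      have := h (m 0)
      rw [hco'] at this
      have hs : m = Finsupp.single 0 (m 0) := by
        ext i
        fin_cases i <;> simp [hm]
      rw [hs, this]
      simp
    · intro h n
      rw [hco', h _ (by simp)]
      simp

theorem power_dual_free {L N : Type*} [Field L] [AddCommGroup N]
    [Module (MvPowerSeries (Fin 2) L) N] [Module.Finite (MvPowerSeries (Fin 2) L) N] :
    Module.Free (MvPowerSeries (Fin 2) L) (Module.Dual (MvPowerSeries (Fin 2) L) N) := by
  obtain ⟨φ, hs, hk⟩ := line_zero (L := L)
  let e := (Ideal.quotEquivOfEq hk.symm).trans (RingHom.quotientKerEquivOfSurjective hs)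
  have : IsPrincipalIdealRing (MvPowerSeries (Fin 2) L ⧸ Ideal.span {(X 1 : MvPowerSeries (Fin 2) L)}) :=
    IsPrincipalIdealRing.of_surjective e.symm e.symm.surjective
  have hne : (X 1 : MvPowerSeries (Fin 2) L) ≠ 0 := by
    intro h
    have := congrArg (coeff (Finsupp.single 1 1)) h
    simp at this
  have : IsDomain (MvPowerSeries (Fin 2) L) := NoZeroDivisors.to_isDomain _
  apply dual_free (X 1)
  · rw [← Ideal.span_singleton_prime hne, ← hk]
    exact RingHom.ker_isPrime φ
  · rw [IsLocalRing.jacobson_eq_maximalIdeal _ bot_ne_top, IsLocalRing.mem_maximalIdeal,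
      mem_nonunits_iff, isUnit_iff_constantCoeff]
    simp

end QS

namespace QS

theorem finite_contra {L T : Type*} [Field L] [CharZero L] [CommRing T]
    [Algebra (MvPowerSeries (Fin 2) L) T] [Module.Finite (MvPowerSeries (Fin 2) L) T]
    (hinj : Function.Injective (algebraMap (MvPowerSeries (Fin 2) L) T))
    (ω : L) (hω : ω ^ 2 + ω + 1 = 0) (x y z u v : T)
    (hx : algebraMap (MvPowerSeries (Fin 2) L) T (X 0) = x)
    (hy : algebraMap (MvPowerSeries (Fin 2) L) T (X 1) = y)
    (h3 : z ^ 3 = -(x ^ 3 + y ^ 3)) (h2 : z ^ 2 = u * x + v * y) : False := by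
  classical
  set B := MvPowerSeries (Fin 2) L with hB
  have : IsDomain B := NoZeroDivisors.to_isDomain _
  have hfree : Module.Free B (Module.Dual B T) := power_dual_free
  have hfin : Module.Finite B (Module.Dual B T) := by unfold Module.Dual; infer_instance
  obtain ⟨f, hf⟩ := exists_dual_ne_zero (B := B) (1 : T) (fun b hb => by
    rw [Algebra.smul_def, mul_one] at hb
    exact hinj (by rw [hb, map_zero]))
  have hnt : Nontrivial (Module.Dual B T) := ⟨⟨f, 0, fun h => hf (by rw [h]; rfl)⟩⟩
  let b := Module.Free.chooseBasis B (Module.Dual B T)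
  have : Nonempty (Module.Free.ChooseBasisIndex B (Module.Dual B T)) := b.index_nonempty
  let E : T → Module.End B (Module.Dual B T) := fun t => (LinearMap.mulLeft B t).dualMap
  have hE : ∀ t (g : Module.Dual B T) s, E t g s = g (t * s) := fun t g s => rfl
  have hmul : ∀ s t, E s * E t = E (s * t) := by
    intro s t
    ext g w
    simp only [Module.End.mul_apply, hE]
    rw [mul_comm s t, mul_assoc]
  let Mx := LinearMap.toMatrixAlgEquiv b
  have hMx : ∀ s t, Mx (E s) * Mx (E t) = Mx (E (s * t)) := fun s t => by rw [← map_mul, hmul]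
  apply trace_contra ω hω (Mx (E z)) (Mx (E u)) (Mx (E v))
  · change _ * _ = _ * _
    rw [hMx, hMx, mul_comm]
  · rw [pow_succ, pow_two, hMx, hMx]
    have : E (z * z * z) = (-((X 0) ^ 3 + (X 1) ^ 3) : B) • 1 := by
      ext g w
      rw [hE]
      have e : z * z * z * w = (-((X 0) ^ 3 + (X 1) ^ 3) : B) • w := by
        rw [Algebra.smul_def, map_neg, map_add, map_pow, map_pow, hx, hy, ← h3]
        ring
      rw [e, map_smul]
      rfl
    rw [this, map_smul, map_one]
  · rw [pow_two, hMx]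
    have : E (z * z) = (X 0 : B) • E u + (X 1 : B) • E v := by
      ext g w
      rw [hE]
      have e : z * z * w = (X 0 : B) • (u * w) + (X 1 : B) • (v * w) := by
        rw [Algebra.smul_def, Algebra.smul_def, hx, hy, ← pow_two, h2]
        ring
      rw [e, map_add, map_smul, map_smul]
      rfl
    rw [this, map_add, map_smul, map_smul]

end QS

namespace QS

theorem precomplete_pi {B : Type*} [CommRing B] (I : Ideal B) [IsPrecomplete I B] (ι : Type*)
    [Finite ι] : IsPrecomplete I (ι → B) := by
  classical
  have := Fintype.ofFinite ι
  constructor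
  intro f hf
  have h1 : ∀ i, ∃ l : B, ∀ n, f n i ≡ l [SMOD (I ^ n • ⊤ : Submodule B B)] := by
    intro i
    apply IsPrecomplete.prec' (I := I) (fun n => f n i)
    intro m n hmn
    have h := hf hmn
    rw [SModEq.sub_mem] at h ⊢
    have h2 := Submodule.mem_map_of_mem (f := LinearMap.proj (R := B) (φ := fun _ : ι => B) i) h
    rw [Submodule.map_smul''] at h2
    exact Submodule.smul_mono le_rfl le_top h2
  choose l hl using h1
  refine ⟨l, fun n => ?_⟩
  rw [SModEq.sub_mem, ← Finset.univ_sum_single (f n - l)]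
  refine Submodule.sum_mem _ fun i _ => ?_
  have h := hl i n
  rw [SModEq.sub_mem] at h
  have e : (Pi.single i ((f n - l) i) : ι → B) = (f n i - l i) • Pi.single i (1 : B) := by
    rw [← Pi.single_smul]
    simp
  rw [e]
  refine Submodule.smul_mem_smul ?_ trivial
  simpa using h

theorem complete_contra {L T : Type*} [Field L] [CharZero L] [CommRing T] [Algebra L T]
    (m : Ideal T) (hmfg : m.FG) [IsAdicComplete m T]
    (hres : ∀ t : T, ∃ l : L, t - algebraMap L T l ∈ m)
    (x y z u v : T) (hx : x ∈ m) (hy : y ∈ m) (h : ℕ) (hh : m ^ h ≤ Ideal.span {x, y})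
    (hai : ∀ (d : ℕ) (F : MvPolynomial (Fin 2) L), F.IsHomogeneous d →
      MvPolynomial.aeval ![x, y] F ∈ (Ideal.span {x, y} : Ideal T) ^ (d + 1) → F = 0)
    (ω : L) (hω : ω ^ 2 + ω + 1 = 0)
    (h3 : z ^ 3 = -(x ^ 3 + y ^ 3)) (h2 : z ^ 2 = u * x + v * y) : False := by
  classical
  obtain ⟨ψ, hψ⟩ := exists_eval (L := L) m ![x, y] (by
    intro i
    fin_cases i
    · exact hx
    · exact hy)
  let _ : Algebra (MvPowerSeries (Fin 2) L) T := ψ.toAlgebra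
  have hψx : ψ (X 0) = x := by
    have := eval_coe _ _ ψ hψ (MvPolynomial.X 0)
    simpa using this
  have hψy : ψ (X 1) = y := by
    have := eval_coe _ _ ψ hψ (MvPolynomial.X 1)
    simpa using this
  have hψC : ∀ c, ψ (C c) = algebraMap L T c := by
    intro c
    have := eval_coe _ _ ψ hψ (MvPolynomial.C c)
    simpa using this
  have hsm : ∀ (b : MvPowerSeries (Fin 2) L) (t : T), b • t = ψ b * t := fun b t => rfl
  -- injectivity
  have hinj : Function.Injective ψ := by
    rw [injective_iff_map_eq_zero]
    intro f hf
    by_contra hf0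
    have hcoef : ∃ d, ∃ s : Fin 2 →₀ ℕ, s.degree = d ∧ coeff s f ≠ 0 := by
      by_contra hcon
      push Not at hcon
      exact hf0 (MvPowerSeries.ext fun s => by simpa using hcon _ s rfl)
    set d := Nat.find hcoef with hd
    obtain ⟨s, hs, hsne⟩ := Nat.find_spec hcoef
    have hmin : ∀ s : Fin 2 →₀ ℕ, s.degree < d → coeff s f = 0 := by
      intro s hs
      have := Nat.find_min hcoef hs
      push Not at this
      exact this s rfl
    let n := h * (d + 1) + (d + 1)
    let F := MvPolynomial.homogeneousComponent d (truncTotal n f)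
    have hF : F.IsHomogeneous d := MvPolynomial.homogeneousComponent_isHomogeneous _ _
    have hsF : MvPolynomial.coeff s F ≠ 0 := by
      rw [MvPolynomial.coeff_homogeneousComponent, if_pos hs, coeff_truncTotal _ (by rw [hs]; lia)]
      exact hsne
    refine hsF ?_
    rw [hai d F hF ?_]
    · simp
    · have e1 : MvPolynomial.aeval ![x, y] (truncTotal n f) ∈ (Ideal.span {x, y} : Ideal T) ^ (d + 1) := by
        have := hψ n f
        rw [hf, zero_sub, neg_mem_iff] at this
        refine Ideal.pow_right_mono hh (d + 1) ?_
        rw [← pow_mul]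
        exact Ideal.pow_le_pow_right (by lia) this
      have e2 : MvPolynomial.aeval ![x, y] (truncTotal n f - F) ∈
          (Ideal.span {x, y} : Ideal T) ^ (d + 1) := by
        apply aeval_mem_pow
        · intro i
          fin_cases i
          · exact Ideal.subset_span (by simp)
          · exact Ideal.subset_span (by simp)
        · rw [MvPolynomial.mem_pow_idealOfVars_iff']
          intro s hs
          rw [MvPolynomial.coeff_sub, MvPolynomial.coeff_homogeneousComponent]
          split_ifs with hsd
          · simp
          · rw [coeff_truncTotal _ (by lia), hmin s (by lia), sub_zero]
      rw [map_sub] at e2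
      have := Ideal.sub_mem _ e1 e2
      simpa using this
  -- finiteness
  have hstep : ∀ k, ∃ s : Set T, s.Finite ∧ ∀ t : T,
      ∃ w ∈ Submodule.span (MvPowerSeries (Fin 2) L) s, t - w ∈ m ^ k := by
    intro k
    induction k with
    | zero => exact ⟨∅, Set.finite_empty, fun t => ⟨0, Submodule.zero_mem _, by simp⟩⟩
    | succ k ih =>
      obtain ⟨s, hsf, hs⟩ := ih
      obtain ⟨G, hG⟩ := hmfg.pow (n := k)
      have hGk : ∀ t ∈ Submodule.span T (G : Set T),
          ∃ w ∈ Submodule.span (MvPowerSeries (Fin 2) L) (G : Set T), w ∈ m ^ k ∧ t - w ∈ m ^ (k + 1) := by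
        intro t ht
        induction ht using Submodule.span_induction with
        | mem g hg =>
          exact ⟨g, Submodule.subset_span hg, by rw [← hG]; exact Submodule.subset_span hg, by simp⟩
        | zero => exact ⟨0, Submodule.zero_mem _, Submodule.zero_mem _, by simp⟩
        | add a b _ _ ha hb =>
          obtain ⟨w, h1, h2, h3⟩ := ha
          obtain ⟨w', h1', h2', h3'⟩ := hb
          refine ⟨w + w', Submodule.add_mem _ h1 h1', Ideal.add_mem _ h2 h2', ?_⟩
          have := Ideal.add_mem _ h3 h3'
          rwa [add_sub_add_comm]
        | smul a b _ hb =>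
          obtain ⟨w, h1, h2, h3⟩ := hb
          obtain ⟨l, hl⟩ := hres a
          refine ⟨(C l : MvPowerSeries (Fin 2) L) • w, Submodule.smul_mem _ _ h1, ?_, ?_⟩
          · rw [hsm]
            exact Ideal.mul_mem_left _ _ h2
          · have e : a • b - (C l : MvPowerSeries (Fin 2) L) • w = a * (b - w) + (a - algebraMap L T l) * w := by
              rw [hsm, hψC, smul_eq_mul]
              ring
            rw [e]
            refine Ideal.add_mem _ (Ideal.mul_mem_left _ _ h3) ?_
            rw [pow_succ']
            exact Ideal.mul_mem_mul hl h2
      refine ⟨s ∪ G, hsf.union G.finite_toSet, fun t => ?_⟩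
      obtain ⟨w, hw, hw'⟩ := hs t
      rw [← hG] at hw'
      obtain ⟨w2, hw2, -, hw2'⟩ := hGk _ hw'
      refine ⟨w + w2, Submodule.add_mem _ (Submodule.span_mono Set.subset_union_left hw)
        (Submodule.span_mono Set.subset_union_right hw2), ?_⟩
      rwa [sub_sub] at hw2'
  obtain ⟨s, hsf, hs⟩ := hstep h
  let I : Ideal (MvPowerSeries (Fin 2) L) := .span (.range X)
  have hIm : ∀ n, ∀ t ∈ (I ^ n • ⊤ : Submodule (MvPowerSeries (Fin 2) L) T), t ∈ m ^ n := by
    intro n t ht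
    have hle : I.map ψ ≤ m := by
      rw [Ideal.map_span, Ideal.span_le]
      rintro _ ⟨_, ⟨i, rfl⟩, rfl⟩
      fin_cases i
      · simpa [hψx] using hx
      · simpa [hψy] using hy
    induction ht using Submodule.smul_induction_on' with
    | smul r hr t _ =>
      rw [hsm]
      refine Ideal.mul_mem_right _ _ (Ideal.pow_right_mono hle n ?_)
      rw [← Ideal.map_pow]
      exact Ideal.mem_map_of_mem _ hr
    | add a _ b _ ha hb => exact Ideal.add_mem _ ha hb
  have hHaus : IsHausdorff I T := by
    constructor
    intro t ht
    apply eq_zero_of_forall_mem_pow m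
    intro n
    have := ht n
    rw [SModEq.zero] at this
    exact hIm n t this
  have hfin : Module.Finite (MvPowerSeries (Fin 2) L) T := by
    have := hsf.fintype
    have := precomplete_pi I s
    let g : (s → MvPowerSeries (Fin 2) L) →ₗ[MvPowerSeries (Fin 2) L] T :=
      Fintype.linearCombination (MvPowerSeries (Fin 2) L) (fun i : s => (i : T))
    have hg : Function.Surjective g := by
      apply surjective_of_mkQ_comp_surjective (I := I)
      intro q
      obtain ⟨t, rfl⟩ := Submodule.Quotient.mk_surjective _ q
      obtain ⟨w, hw, hw'⟩ := hs t
      have : w ∈ LinearMap.range g := by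
        rw [Fintype.range_linearCombination]
        simpa using hw
      obtain ⟨c, rfl⟩ := this
      refine ⟨c, ?_⟩
      symm
      change Submodule.Quotient.mk t = Submodule.Quotient.mk (g c)
      rw [Submodule.Quotient.eq]
      obtain ⟨a, b, hab⟩ := Ideal.mem_span_pair.1 (hh hw')
      have e : t - g c = (X 0 : MvPowerSeries (Fin 2) L) • a + (X 1 : MvPowerSeries (Fin 2) L) • b := by
        rw [← hab, hsm, hsm, hψx, hψy]
        ring
      rw [e]
      exact Submodule.add_mem _
        (Submodule.smul_mem_smul (Ideal.subset_span ⟨0, rfl⟩) trivial)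
        (Submodule.smul_mem_smul (Ideal.subset_span ⟨1, rfl⟩) trivial)
    exact Module.Finite.of_surjective g hg
  exact finite_contra hinj ω hω x y z u v hψx hψy h3 h2

end QS

namespace QS

/-! ### Analytic independence of parameters -/

theorem aeval_homog {L T σ : Type*} [CommRing L] [CommRing T] [Algebra L T] (d : ℕ)
    (F : MvPolynomial σ L) (hF : F.IsHomogeneous d) (w : T) (c : σ → T) :
    MvPolynomial.aeval (fun i => w * c i) F = w ^ d * MvPolynomial.aeval c F := by
  rw [MvPolynomial.aeval_def, MvPolynomial.aeval_def, MvPolynomial.eval₂_eq, MvPolynomial.eval₂_eq,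
    Finset.mul_sum]
  refine Finset.sum_congr rfl fun s hs => ?_
  have hd : ∑ i ∈ s.support, s i = d := by
    have := hF (MvPolynomial.mem_support_iff.1 hs)
    simpa [Finsupp.weight_apply, Finsupp.sum] using this
  simp_rw [mul_pow]
  rw [Finset.prod_mul_distrib, Finset.prod_pow_eq_pow_sum, hd]
  ring

theorem exists_nat_eval_ne_zero {L : Type*} [Field L] [CharZero L] (F : MvPolynomial (Fin 2) L)
    (hF : F ≠ 0) : ∃ a b : ℕ, b ≠ 0 ∧ MvPolynomial.eval ![(a : L), (b : L)] F ≠ 0 := by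
  by_contra hcon
  push Not at hcon
  have h0 : F * MvPolynomial.X 1 = 0 := by
    refine MvPolynomial.funext_set (fun _ => Set.range (Nat.cast : ℕ → L))
      (fun _ => Set.infinite_range_of_injective Nat.cast_injective) fun c hc => ?_
    obtain ⟨a, ha⟩ := hc 0 trivial
    obtain ⟨b, hb⟩ := hc 1 trivial
    have hcc : c = ![(a : L), (b : L)] := by
      ext i
      fin_cases i
      · exact ha.symm
      · exact hb.symm
    rw [hcc]
    by_cases hb0 : b = 0
    · simp [hb0]
    · simp [hcon a b hb0]
  rcases mul_eq_zero.1 h0 with h | h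
  · exact hF h
  · exact MvPolynomial.X_ne_zero 1 h

theorem span_pair_pow_le {A : Type*} [CommRing A] (x y : A) (d : ℕ) :
    (Ideal.span {x, y} : Ideal A) ^ d ≤ Ideal.span {x} ⊔ Ideal.span {y ^ d} := by
  induction d with
  | zero => simp
  | succ d ih =>
    rw [pow_succ]
    rw [Ideal.mul_le]
    intro r hr s hs
    obtain ⟨r1, hr1, r2, hr2, rfl⟩ := Submodule.mem_sup.1 (ih hr)
    obtain ⟨c1, rfl⟩ := Ideal.mem_span_singleton.1 hr1
    obtain ⟨c2, rfl⟩ := Ideal.mem_span_singleton.1 hr2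
    obtain ⟨a, b, rfl⟩ := Ideal.mem_span_pair.1 hs
    have e : (x * c1 + y ^ d * c2) * (a * x + b * y) =
        x * (c1 * (a * x + b * y) + y ^ d * c2 * a) + y ^ (d + 1) * (c2 * b) := by ring
    rw [e]
    exact Ideal.add_mem _
      (Ideal.mem_sup_left (Ideal.mul_mem_right _ _ (Ideal.mem_span_singleton_self _)))
      (Ideal.mem_sup_right (Ideal.mul_mem_right _ _ (Ideal.mem_span_singleton_self _)))

theorem analytic_indep {A T L : Type*} [CommRing A] [IsLocalRing A] [IsNoetherianRing A]
    [CommRing T] [Algebra A T] [Field L] [CharZero L] [Algebra L T]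
    (hnat : ∀ n : ℕ, n ≠ 0 → IsUnit (n : A))
    (hev : ∀ k, ∃ e : T →+* A ⧸ (IsLocalRing.maximalIdeal A) ^ k,
      e.comp (algebraMap A T) = Ideal.Quotient.mk _)
    (x y : A) (hmin : IsLocalRing.maximalIdeal A ∈ (Ideal.span {x, y} : Ideal A).minimalPrimes)
    (h : ℕ) (hh : IsLocalRing.maximalIdeal A ^ h ≤ Ideal.span {x, y})
    (hht : ¬ (IsLocalRing.maximalIdeal A).height ≤ 1)
    (d : ℕ) (F : MvPolynomial (Fin 2) L) (hF : F.IsHomogeneous d)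
    (hmem : MvPolynomial.aeval ![algebraMap A T x, algebraMap A T y] F ∈
      (Ideal.span {algebraMap A T x, algebraMap A T y} : Ideal T) ^ (d + 1)) : F = 0 := by
  by_contra hF0
  obtain ⟨a, b, hb, hab⟩ := exists_nat_eval_ne_zero F hF0
  set m := IsLocalRing.maximalIdeal A with hm
  set I : Ideal A := Ideal.span {x, y} with hI
  have hIm : I ≤ m := hmin.1.2
  have hxm : x ∈ m := hIm (Ideal.subset_span (by simp))
  have hym : y ∈ m := hIm (Ideal.subset_span (by simp))
  set w : A := b * x - a * y with hw
  have hwm : w ∈ m := Ideal.sub_mem _ (Ideal.mul_mem_left _ _ hxm) (Ideal.mul_mem_left _ _ hym)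
  have hI2 : I = Ideal.span {w, y} := by
    apply le_antisymm
    · rw [hI, Ideal.span_le]
      rintro _ (hxx | rfl)
      · rw [hxx]
        obtain ⟨c, hc⟩ := (hnat b hb).exists_left_inv
        refine Ideal.mem_span_pair.2 ⟨c, c * a, ?_⟩
        rw [hw]
        linear_combination x * hc
      · exact Ideal.subset_span (by simp)
    · rw [Ideal.span_le]
      rintro _ (rfl | rfl)
      · exact Ideal.sub_mem _ (Ideal.mul_mem_left _ _ (Ideal.subset_span (by simp)))
          (Ideal.mul_mem_left _ _ (Ideal.subset_span (by simp)))
      · exact Ideal.subset_span (by simp)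
  set f := algebraMap A T with hf
  have hImap : (Ideal.span {f x, f y} : Ideal T) = I.map f := by
    rw [hI, Ideal.map_span, Set.image_pair]
  -- `y ^ d` modulo `w`
  let K : Ideal A := Ideal.span {w} ⊔ I * I ^ d
  have hyK : f (y ^ d) ∈ K.map f := by
    have h1 : MvPolynomial.aeval ![f x, f y] F ∈ K.map f := by
      rw [hImap, pow_succ', ← Ideal.map_pow, ← Ideal.map_mul] at hmem
      exact Ideal.map_mono le_sup_right hmem
    have h2 : MvPolynomial.aeval (fun i => (b : T) * ![f x, f y] i) F ∈ K.map f := by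
      rw [aeval_homog d F hF]
      exact Ideal.mul_mem_left _ _ h1
    have h3 : MvPolynomial.aeval (fun i => (b : T) * ![f x, f y] i) F -
        MvPolynomial.aeval (fun i => f y * ![(a : T), (b : T)] i) F ∈ K.map f := by
      rw [← Ideal.Quotient.mk_eq_mk_iff_sub_mem]
      change Ideal.Quotient.mkₐ L (K.map f) _ = Ideal.Quotient.mkₐ L (K.map f) _
      rw [MvPolynomial.comp_aeval_apply, MvPolynomial.comp_aeval_apply]
      congr 2
      funext i
      change Ideal.Quotient.mk (K.map f) _ = Ideal.Quotient.mk (K.map f) _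
      rw [Ideal.Quotient.mk_eq_mk_iff_sub_mem]
      fin_cases i
      · have : f w ∈ K.map f :=
          Ideal.mem_map_of_mem _ (Ideal.mem_sup_left (Ideal.mem_span_singleton_self _))
        rw [hw] at this
        simpa [mul_comm] using this
      · simp [mul_comm]
    have h4 := Ideal.sub_mem _ h2 h3
    rw [sub_sub_cancel, aeval_homog d F hF] at h4
    have h5 : MvPolynomial.aeval ![(a : T), (b : T)] F =
        algebraMap L T (MvPolynomial.eval ![(a : L), (b : L)] F) := by
      have := MvPolynomial.aeval_algebraMap_apply (A := L) T ![(a : L), (b : L)] F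
      rw [MvPolynomial.aeval_eq_eval] at this
      rw [← this]
      congr 2
      funext i
      fin_cases i <;> simp
    rw [h5] at h4
    have hu : IsUnit (algebraMap L T (MvPolynomial.eval ![(a : L), (b : L)] F)) :=
      (isUnit_iff_ne_zero.2 hab).map _
    rw [map_pow]
    exact (Ideal.mul_unit_mem_iff_mem _ hu).1 h4
  obtain ⟨k, hk⟩ : ∃ k, m ^ k ≤ K := by
    refine ⟨h * (d + 1), ?_⟩
    rw [pow_mul]
    refine (Ideal.pow_right_mono hh (d + 1)).trans ?_
    rw [pow_succ']
    exact le_sup_right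
  have hyK' : y ^ d ∈ K := by
    obtain ⟨e, he⟩ := hev k
    let e' : T →+* A ⧸ K := (Ideal.Quotient.factor hk).comp e
    have he' : ∀ s, e' (f s) = Ideal.Quotient.mk K s := by
      intro s
      have := RingHom.congr_fun he s
      simp only [RingHom.comp_apply] at this
      simp [e', this]
    have hle : K.map f ≤ RingHom.ker e' := by
      rw [Ideal.map_le_iff_le_comap]
      intro s hs
      rw [Ideal.mem_comap, RingHom.mem_ker, he', Ideal.Quotient.eq_zero_iff_mem]
      exact hs
    have := hle hyK
    rwa [RingHom.mem_ker, he', Ideal.Quotient.eq_zero_iff_mem] at this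
  have hle : I ^ d ≤ Ideal.span {w} ⊔ I * I ^ d := by
    conv_lhs => rw [hI2]
    refine (span_pair_pow_le w y d).trans (sup_le le_sup_left ?_)
    rw [Ideal.span_le]
    rintro _ rfl
    exact hyK'
  have hle2 : I ^ d ≤ Ideal.span {w} := by
    refine Submodule.le_of_le_smul_of_le_jacobson_bot (I := I) (IsNoetherian.noetherian _) ?_ hle
    rw [IsLocalRing.jacobson_eq_maximalIdeal _ bot_ne_top]
    exact hIm
  apply hht
  have hwp : (Ideal.span {w} : Ideal A).IsPrincipal := ⟨⟨w, rfl⟩⟩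
  refine Ideal.height_le_one_of_isPrincipal_of_mem_minimalPrimes (Ideal.span {w}) m
    ⟨⟨hmin.1.1, by rw [Ideal.span_le]; rintro _ rfl; exact hwm⟩, ?_⟩
  rintro q ⟨hq, hwq⟩ -
  have : m ^ (h * d) ≤ q := by
    rw [pow_mul]
    exact (Ideal.pow_right_mono hh d).trans (hle2.trans hwq)
  exact hq.le_of_pow_le this

end QS

namespace QS

theorem formallySmooth_field (L : Type*) [Field L] [Algebra ℂ L] :
    Algebra.FormallySmooth ℂ L := by
  obtain ⟨s, hs⟩ := exists_isTranscendenceBasis ℂ L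
  have h1 := hs.isAlgebraic_field
  have : CharZero (IntermediateField.adjoin ℂ (Set.range ((↑) : s → L))) :=
    algebraRat.charZero _
  have : Algebra.IsSeparable (IntermediateField.adjoin ℂ (Set.range ((↑) : s → L))) L :=
    inferInstance
  exact .of_algebraicIndependent_of_isSeparable hs.1

theorem local_height {A : Type*} [CommRing A] [IsLocalRing A] [IsNoetherianRing A] [Algebra ℂ A]
    (x y z u v : A) (h3 : z ^ 3 = -(x ^ 3 + y ^ 3)) (h2 : z ^ 2 = u * x + v * y)
    (hmin : IsLocalRing.maximalIdeal A ∈ (Ideal.span {x, y} : Ideal A).minimalPrimes) :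
    (IsLocalRing.maximalIdeal A).height ≤ 1 := by
  by_contra hht
  set m := IsLocalRing.maximalIdeal A with hm
  letI : Field (A ⧸ m) := Ideal.Quotient.field m
  have : Algebra.FormallySmooth ℂ (A ⧸ m) := formallySmooth_field (A ⧸ m)
  have hfg : m.FG := m.fg_of_isNoetherianRing
  obtain ⟨g, hg⟩ := Algebra.FormallySmooth.exists_adicCompletionEvalOneₐ_comp_eq
    (R := ℂ) (A := A ⧸ m) (S := A) (I := m) (AlgHom.id ℂ _)
  set T := AdicCompletion m A with hT
  letI : Algebra (A ⧸ m) T := g.toRingHom.toAlgebra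
  have hg' : ∀ l : A ⧸ m, AdicCompletion.evalOneₐ m (algebraMap (A ⧸ m) T l) = l := fun l =>
    DFunLike.congr_fun hg l
  have : IsAdicComplete (m.map (algebraMap A T)) T := AdicCompletion.isAdicComplete_self m hfg
  have : CharZero (A ⧸ m) := by
    haveI : Algebra ℚ (A ⧸ m) := ((algebraMap ℂ (A ⧸ m)).comp (algebraMap ℚ ℂ)).toAlgebra
    exact algebraRat.charZero _
  obtain ⟨h, hh⟩ : ∃ h, m ^ h ≤ Ideal.span {x, y} := by
    have hrad : (Ideal.span {x, y} : Ideal A).radical = m := by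
      apply le_antisymm
      · exact (Ideal.IsPrime.radical_le_iff (IsLocalRing.maximalIdeal.isMaximal A).isPrime).2
          hmin.1.2
      · rw [Ideal.radical_eq_sInf]
        refine le_sInf ?_
        rintro P ⟨hP, hPp⟩
        exact hmin.2 ⟨hPp, hP⟩ (IsLocalRing.le_maximalIdeal hPp.ne_top)
    obtain ⟨n, hn⟩ := Ideal.exists_radical_pow_le_of_fg (Ideal.span {x, y} : Ideal A)
      (IsNoetherian.noetherian _)
    exact ⟨n, hrad ▸ hn⟩
  have hxm : x ∈ m := hmin.1.2 (Ideal.subset_span (by simp))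
  have hym : y ∈ m := hmin.1.2 (Ideal.subset_span (by simp))
  obtain ⟨ω, hω⟩ : ∃ ω : ℂ, ω ^ 2 + ω + 1 = 0 := by
    obtain ⟨s, hs⟩ := IsAlgClosed.exists_pow_nat_eq (-3 : ℂ) (n := 2) (by norm_num)
    exact ⟨(-1 + s) / 2, by linear_combination hs / 4⟩
  refine complete_contra (L := A ⧸ m) (T := T) (m.map (algebraMap A T)) (hfg.map _) ?_
    (algebraMap A T x) (algebraMap A T y) (algebraMap A T z) (algebraMap A T u) (algebraMap A T v)
    (Ideal.mem_map_of_mem _ hxm) (Ideal.mem_map_of_mem _ hym) h ?_ ?_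
    (algebraMap ℂ (A ⧸ m) ω) ?_ ?_ ?_
  · intro t
    refine ⟨AdicCompletion.evalOneₐ m t, ?_⟩
    rw [← AdicCompletion.ker_evalOneₐ_eq_map m hfg, RingHom.mem_ker]
    change AdicCompletion.evalOneₐ m _ = 0
    rw [map_sub, hg', sub_self]
  · rw [← Ideal.map_pow, ← Set.image_pair, ← Ideal.map_span]
    exact Ideal.map_mono hh
  · intro d F hF hmem
    refine analytic_indep (A := A) (T := T) (L := A ⧸ m) ?_ ?_ x y hmin h hh hht d F hF hmem
    · intro n hn
      have : IsUnit (algebraMap ℂ A n) := (isUnit_iff_ne_zero.2 (by exact_mod_cast hn)).map _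
      simpa using this
    · intro k
      exact ⟨(AdicCompletion.evalₐ m k).toRingHom, by ext a; simp [AdicCompletion.evalₐ_of]⟩
  · rw [← map_pow, ← map_add, ← map_one (algebraMap ℂ (A ⧸ m)), ← map_add, hω, map_zero]
  · simp only [← map_pow, ← map_add, ← map_neg, h3]
  · simp only [← map_pow, ← map_add, ← map_mul, h2]

theorem global_height {S : Type u} [CommRing S] [IsNoetherianRing S] (φ : ℂ →+* S)
    (x y z u v : S) (h3 : z ^ 3 = -(x ^ 3 + y ^ 3)) (h2 : z ^ 2 = u * x + v * y)
    (hne : (Ideal.span {x, y} : Ideal S) ≠ ⊤) :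
    ⨅ (P : PrimeSpectrum S) (_ : Ideal.span {x, y} ≤ P.asIdeal), Order.height P ≤ 1 := by
  obtain ⟨P, hP⟩ := Ideal.nonempty_minimalPrimes hne
  haveI : P.IsPrime := hP.1.1
  refine (iInf₂_le (⟨P, hP.1.1⟩ : PrimeSpectrum S) hP.1.2).trans ?_
  have e : Order.height (⟨P, hP.1.1⟩ : PrimeSpectrum S) = P.height :=
    (PrimeSpectrum.height_eq_orderHeight _).symm
  rw [e]
  letI : Algebra ℂ (Localization.AtPrime P) :=
    ((algebraMap S (Localization.AtPrime P)).comp φ).toAlgebra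
  have hloc := local_height (A := Localization.AtPrime P) (algebraMap S _ x) (algebraMap S _ y)
    (algebraMap S _ z) (algebraMap S _ u) (algebraMap S _ v)
    (by simp only [← map_pow, ← map_add, ← map_neg, h3])
    (by simp only [← map_pow, ← map_add, ← map_mul, h2]) ?_
  · rw [← IsLocalization.height_under P.primeCompl, Localization.AtPrime.under_maximalIdeal] at hloc
    exact hloc
  · rw [← Set.image_pair, ← Ideal.map_span,
      IsLocalization.minimalPrimes_map P.primeCompl (Localization.AtPrime P) (Ideal.span {x, y})]
    rwa [Set.mem_preimage, Localization.AtPrime.under_maximalIdeal]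


end QS

namespace QS

/-- A finitely generated domain of characteristic zero has a prime over some `p ≡ 2 mod 3`. -/
theorem exists_prime_two_mod_three (D : Type*) [CommRing D] [IsDomain D] [CharZero D]
    [Algebra.FiniteType ℤ D] : ∃ p : ℕ, p.Prime ∧ p % 3 = 2 ∧ ∃ q : Ideal D, q.IsPrime ∧
      (p : D) ∈ q := by
  have : Module.IsTorsionFree ℤ D := inferInstance
  have : Module.Flat ℤ D := inferInstance
  have : Algebra.FinitePresentation ℤ D := Algebra.FinitePresentation.of_finiteType.1 inferInstance
  have hop : IsOpenMap (PrimeSpectrum.comap (algebraMap ℤ D)) :=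
    PrimeSpectrum.isOpenMap_comap_of_hasGoingDown_of_finitePresentation
  have hU := hop.isOpen_range
  have h0 : PrimeSpectrum.comap (algebraMap ℤ D) ⊥ ∈ Set.range (PrimeSpectrum.comap (algebraMap ℤ D)) :=
    ⟨_, rfl⟩
  obtain ⟨_, ⟨n, rfl⟩, hn0, hn⟩ :=
    PrimeSpectrum.isTopologicalBasis_basic_opens.exists_subset_of_mem_open h0 hU
  have hn0' : n ≠ 0 := by
    rintro rfl
    simp at hn0
  have h2 : IsUnit (2 : ZMod 3) := by decide
  obtain ⟨p, hpn, hp, hp3⟩ := Nat.forall_exists_prime_gt_and_eq_mod h2 n.natAbs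
  have hpZ : Prime (p : ℤ) := Nat.prime_iff_prime_int.1 hp
  have hpr : (Ideal.span {(p : ℤ)}).IsPrime :=
    (Ideal.span_singleton_prime hpZ.ne_zero).2 hpZ
  have hmem : (⟨Ideal.span {(p : ℤ)}, hpr⟩ : PrimeSpectrum ℤ) ∈
      (PrimeSpectrum.basicOpen n : Set (PrimeSpectrum ℤ)) := by
    change n ∉ Ideal.span {(p : ℤ)}
    rw [Ideal.mem_span_singleton]
    intro hd
    have := Nat.le_of_dvd (Int.natAbs_pos.2 hn0') (Int.natCast_dvd.1 hd)
    omega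
  obtain ⟨q, hq⟩ := hn hmem
  refine ⟨p, hp, ?_, q.asIdeal, q.isPrime, ?_⟩
  · have : ((p : ℕ) : ZMod 3) = ((2 : ℕ) : ZMod 3) := by rw [hp3]; rfl
    have := (ZMod.natCast_eq_natCast_iff' _ _ _).1 this
    simpa using this
  · have h1 : (p : ℤ) ∈ (PrimeSpectrum.comap (algebraMap ℤ D) q).asIdeal := by
      rw [hq]
      exact Ideal.mem_span_singleton_self _
    simpa using h1


end QS

namespace QS

/-! ### The Artinian test algebras -/

section tower
variable (k : Type*) [Field k] (n : ℕ)

abbrev Tow1 := AdjoinRoot (Polynomial.X ^ n : Polynomial k)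

abbrev Tow2 := AdjoinRoot (Polynomial.X ^ n : Polynomial (Tow1 k n))

noncomputable def tx : Tow2 k n := AdjoinRoot.of _ (AdjoinRoot.root _)

noncomputable def ty : Tow2 k n := AdjoinRoot.root _

noncomputable def cubic : Polynomial (Tow2 k n) :=
  Polynomial.X ^ 3 + Polynomial.C (tx k n ^ 3 + ty k n ^ 3)

abbrev Tow := AdjoinRoot (cubic k n)

noncomputable def Tx : Tow k n := AdjoinRoot.of _ (tx k n)

noncomputable def Ty : Tow k n := AdjoinRoot.of _ (ty k n)

noncomputable def Tz : Tow k n := AdjoinRoot.root _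

theorem tx_pow : tx k n ^ n = 0 := by
  have h : (AdjoinRoot.root (Polynomial.X ^ n : Polynomial k)) ^ n = 0 := by
    rw [← AdjoinRoot.mk_X, ← map_pow, AdjoinRoot.mk_self]
  rw [tx, ← map_pow, h, map_zero]

theorem ty_pow : ty k n ^ n = 0 := by
  rw [ty, ← AdjoinRoot.mk_X, ← map_pow, AdjoinRoot.mk_self]

theorem Tx_pow : Tx k n ^ n = 0 := by rw [Tx, ← map_pow, tx_pow, map_zero]

theorem Ty_pow : Ty k n ^ n = 0 := by rw [Ty, ← map_pow, ty_pow, map_zero]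

theorem Tz_pow : Tz k n ^ 3 = -(Tx k n ^ 3 + Ty k n ^ 3) := by
  have h : AdjoinRoot.mk (cubic k n) (cubic k n) = 0 := AdjoinRoot.mk_self
  have h2 : AdjoinRoot.mk (cubic k n) (cubic k n) = Tz k n ^ 3 + (Tx k n ^ 3 + Ty k n ^ 3) := by
    conv_lhs => rw [show AdjoinRoot.mk (cubic k n) (cubic k n) = AdjoinRoot.mk (cubic k n)
      (Polynomial.X ^ 3 + Polynomial.C (tx k n ^ 3 + ty k n ^ 3)) from rfl]
    simp only [map_add, map_pow, AdjoinRoot.mk_X, AdjoinRoot.mk_C]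
    rfl
  rw [h2] at h
  linear_combination h

theorem cubic_monic : (cubic k n).Monic := Polynomial.monic_X_pow_add_C _ (by norm_num)

theorem finrank_adjoinRoot {R : Type*} [CommRing R] [Nontrivial R] (f : Polynomial R)
    (hf : f.Monic) : Module.finrank R (AdjoinRoot f) = f.natDegree := by
  rw [(AdjoinRoot.powerBasis' hf).finrank, AdjoinRoot.powerBasis'_dim]

theorem nontrivial_adjoinRoot {R : Type*} [CommRing R] [Nontrivial R] (f : Polynomial R)
    (hf : f.Monic) (h : 0 < f.natDegree) : Nontrivial (AdjoinRoot f) := by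
  have : Module.finrank R (AdjoinRoot f) ≠ 0 := by rw [finrank_adjoinRoot f hf]; omega
  by_contra hn
  rw [not_nontrivial_iff_subsingleton] at hn
  exact this Module.finrank_zero_of_subsingleton

theorem tow_finite : Module.Finite k (Tow k n) := by
  have h1 : Module.Finite k (Tow1 k n) := (Polynomial.monic_X_pow n).finite_adjoinRoot
  have h2 : Module.Finite (Tow1 k n) (Tow2 k n) := (Polynomial.monic_X_pow n).finite_adjoinRoot
  have h3 : Module.Finite (Tow2 k n) (Tow k n) := (cubic_monic k n).finite_adjoinRoot
  have h4 : Module.Finite k (Tow2 k n) := Module.Finite.trans (Tow1 k n) _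
  exact Module.Finite.trans (Tow2 k n) _

theorem tow_finrank (hn : 0 < n) : Module.finrank k (Tow k n) = 3 * n ^ 2 := by
  have h1 : Module.Free k (Tow1 k n) := (Polynomial.monic_X_pow n).free_adjoinRoot
  have h2 : Module.Free (Tow1 k n) (Tow2 k n) := (Polynomial.monic_X_pow n).free_adjoinRoot
  have h3 : Module.Free (Tow2 k n) (Tow k n) := (cubic_monic k n).free_adjoinRoot
  have e1 := finrank_adjoinRoot (R := k) (Polynomial.X ^ n) (Polynomial.monic_X_pow n)
  have n1 : Nontrivial (Tow1 k n) :=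
    nontrivial_adjoinRoot _ (Polynomial.monic_X_pow n) (by simpa using hn)
  have e2 := finrank_adjoinRoot (R := Tow1 k n) (Polynomial.X ^ n) (Polynomial.monic_X_pow n)
  have n2 : Nontrivial (Tow2 k n) :=
    nontrivial_adjoinRoot _ (Polynomial.monic_X_pow n) (by simpa using hn)
  have e3 := finrank_adjoinRoot (R := Tow2 k n) (cubic k n) (cubic_monic k n)
  have e3' : (cubic k n).natDegree = 3 := Polynomial.natDegree_X_pow_add_C
  rw [← Module.finrank_mul_finrank k (Tow2 k n) (Tow k n),
    ← Module.finrank_mul_finrank k (Tow1 k n) (Tow2 k n), e1, e2, e3, e3']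
  simp only [Polynomial.natDegree_X_pow]
  ring

theorem adjoinRoot_le {R : Type*} [CommRing R] (f : Polynomial R) (S : Subring (AdjoinRoot f))
    (h1 : ∀ a, AdjoinRoot.of f a ∈ S) (h2 : AdjoinRoot.root f ∈ S) (q : AdjoinRoot f) : q ∈ S := by
  induction q using AdjoinRoot.induction_on with
  | ih p =>
    induction p using Polynomial.induction_on' with
    | add p q hp hq => rw [map_add]; exact S.add_mem hp hq
    | monomial i a =>
      rw [← Polynomial.C_mul_X_pow_eq_monomial, map_mul, map_pow, AdjoinRoot.mk_X,
        AdjoinRoot.mk_C]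
      exact S.mul_mem (h1 a) (S.pow_mem h2 i)

theorem tow_gen (S : Subalgebra k (Tow k n)) (hx : Tx k n ∈ S) (hy : Ty k n ∈ S)
    (hz : Tz k n ∈ S) : S = ⊤ := by
  rw [eq_top_iff]
  rintro q -
  refine adjoinRoot_le _ S.toSubring (fun a => ?_) hz q
  refine adjoinRoot_le _ (S.toSubring.comap (AdjoinRoot.of (cubic k n))) (fun a => ?_) hy a
  refine adjoinRoot_le _ ((S.toSubring.comap (AdjoinRoot.of (cubic k n))).comap (AdjoinRoot.of _))
    (fun a => ?_) hx a
  exact S.algebraMap_mem a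

/-- Any algebra with the right relations and generators is a quotient of the tower. -/
theorem finrank_le_of_gen (C : Type*) [CommRing C] [Algebra k C] (x y z : C) (hn : 0 < n)
    (hx : x ^ n = 0) (hy : y ^ n = 0) (hz : z ^ 3 = -(x ^ 3 + y ^ 3))
    (hgen : ∀ S : Subalgebra k C, x ∈ S → y ∈ S → z ∈ S → S = ⊤) :
    Module.finrank k C ≤ 3 * n ^ 2 := by
  let φ1 : Tow1 k n →ₐ[k] C := AdjoinRoot.liftAlgHom _ (Algebra.ofId k C) x (by simpa using hx)
  have h1 : φ1 (AdjoinRoot.root _) = x := AdjoinRoot.liftAlgHom_root ..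
  let φ2 : Tow2 k n →ₐ[k] C := AdjoinRoot.liftAlgHom _ φ1 y (by simpa using hy)
  have h2x : φ2 (tx k n) = x := (AdjoinRoot.liftAlgHom_of ..).trans h1
  have h2y : φ2 (ty k n) = y := AdjoinRoot.liftAlgHom_root ..
  let φ3 : Tow k n →ₐ[k] C := AdjoinRoot.liftAlgHom _ φ2 z (by
    simp only [cubic, Polynomial.eval₂_add, Polynomial.eval₂_X_pow, Polynomial.eval₂_C]
    simp only [map_add, map_pow, RingHom.coe_coe, h2x, h2y, hz]
    ring)
  have h3x : φ3 (Tx k n) = x := (AdjoinRoot.liftAlgHom_of ..).trans h2x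
  have h3y : φ3 (Ty k n) = y := (AdjoinRoot.liftAlgHom_of ..).trans h2y
  have h3z : φ3 (Tz k n) = z := AdjoinRoot.liftAlgHom_root ..
  have hr := hgen φ3.range ⟨_, h3x⟩ ⟨_, h3y⟩ ⟨_, h3z⟩
  have := tow_finite k n
  rw [← tow_finrank k n hn]
  refine LinearMap.finrank_le_finrank_of_surjective (f := φ3.toLinearMap) ?_
  exact (AlgHom.range_eq_top φ3).1 hr

theorem tow_quot (p : ℕ) (hp : 0 < p) :
    Module.finrank k (Tow k n ⧸ (Ideal.span {Tx k n ^ p, Ty k n ^ p} : Ideal (Tow k n)))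
      ≤ 3 * p ^ 2 := by
  set J := (Ideal.span {Tx k n ^ p, Ty k n ^ p} : Ideal (Tow k n))
  refine finrank_le_of_gen k p _ (Ideal.Quotient.mk J (Tx k n)) (Ideal.Quotient.mk J (Ty k n))
    (Ideal.Quotient.mk J (Tz k n)) hp ?_ ?_ ?_ ?_
  · rw [← map_pow, Ideal.Quotient.eq_zero_iff_mem]
    exact Ideal.subset_span (by simp)
  · rw [← map_pow, Ideal.Quotient.eq_zero_iff_mem]
    exact Ideal.subset_span (by simp)
  · simp only [← map_pow, ← map_add, ← map_neg, Tz_pow]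
  · intro S hx hy hz
    have := tow_gen k n (S.comap (Ideal.Quotient.mkₐ k J)) hx hy hz
    rw [eq_top_iff]
    rintro q -
    obtain ⟨q, rfl⟩ := Ideal.Quotient.mk_surjective q
    have : q ∈ S.comap (Ideal.Quotient.mkₐ k J) := this ▸ Algebra.mem_top
    exact this

end tower


end QS

namespace QS

/-- Explicit form of a chain of ideals with cyclic factors killed by `a, b`, modulo `G`. -/
def EqSys {S : Type*} [CommRing S] (h N : ℕ) (a b : S) (G : Fin N → S) : Prop :=
  ∃ (f c : Fin h → S) (α β : Fin h → Fin h → S) (γ δ : Fin h → Fin N → S) (e : Fin N → S),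
    (∀ i, a * f i = ∑ j ∈ Finset.Iio i, α i j * f j + ∑ l, γ i l * G l) ∧
    (∀ i, b * f i = ∑ j ∈ Finset.Iio i, β i j * f j + ∑ l, δ i l * G l) ∧
    1 = ∑ j, c j * f j + ∑ l, e l * G l

theorem EqSys.map {S S' : Type*} [CommRing S] [CommRing S'] {h N : ℕ} {a b : S} {G : Fin N → S}
    (H : EqSys h N a b G) (φ : S →+* S') : EqSys h N (φ a) (φ b) (fun l => φ (G l)) := by
  obtain ⟨f, c, α, β, γ, δ, e, h1, h2, h3⟩ := H
  refine ⟨fun i => φ (f i), fun i => φ (c i), fun i j => φ (α i j), fun i j => φ (β i j),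
    fun i j => φ (γ i j), fun i j => φ (δ i j), fun i => φ (e i), fun i => ?_, fun i => ?_, ?_⟩
  · simpa using congrArg φ (h1 i)
  · simpa using congrArg φ (h2 i)
  · simpa using congrArg φ h3

theorem finrank_le_of_eqSys {k Q : Type*} [Field k] [CommRing Q] [Algebra k Q] [Module.Finite k Q]
    {h N : ℕ} {a b : Q} {G : Fin N → Q} (hG : ∀ l, G l = 0) (H : EqSys h N a b G) :
    Module.finrank k Q ≤ h * Module.finrank k (Q ⧸ (Ideal.span {a, b} : Ideal Q)) := by
  obtain ⟨f, c, α, β, γ, δ, e, h1, h2, h3⟩ := H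
  simp only [hG, mul_zero, Finset.sum_const_zero, add_zero] at h1 h2 h3
  set J : Ideal Q := Ideal.span {a, b} with hJ
  obtain ⟨E, hE⟩ := Submodule.exists_isCompl (J.restrictScalars k)
  have hEr : Module.finrank k E = Module.finrank k (Q ⧸ J) :=
    (LinearEquiv.finrank_eq (Submodule.quotientEquivOfIsCompl (J.restrictScalars k) E hE)).symm
  let N : ℕ → Ideal Q := fun i => Ideal.span (f '' {j | j.1 < i})
  have key : ∀ i ≤ h, Module.finrank k ((N i).restrictScalars k) ≤ i * Module.finrank k (Q ⧸ J) := by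
    intro i
    induction i with
    | zero =>
      intro _
      have : N 0 = ⊥ := by simp [N]
      rw [this, Submodule.restrictScalars_bot, finrank_bot]
      simp
    | succ i ih =>
      intro hi
      have ih := ih (by omega)
      let g : Q →ₗ[k] Q := LinearMap.mulLeft k (f ⟨i, hi⟩)
      have hsub : ∀ (x : Fin h → Q), ∑ j ∈ Finset.Iio (⟨i, hi⟩ : Fin h), x j * f j ∈ N i := by
        intro x
        refine Ideal.sum_mem _ fun j hj => Ideal.mul_mem_left _ _ (Ideal.subset_span ⟨j, ?_, rfl⟩)
        exact Finset.mem_Iio.1 hj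
      have hJf : ∀ q ∈ J, q * f ⟨i, hi⟩ ∈ N i := by
        intro q hq
        obtain ⟨r, s, rfl⟩ := Ideal.mem_span_pair.1 hq
        have : (r * a + s * b) * f ⟨i, hi⟩ = r * (a * f ⟨i, hi⟩) + s * (b * f ⟨i, hi⟩) := by ring
        rw [this, h1, h2]
        exact Ideal.add_mem _ (Ideal.mul_mem_left _ _ (hsub _)) (Ideal.mul_mem_left _ _ (hsub _))
      have hle : (N (i + 1)).restrictScalars k ≤ (N i).restrictScalars k ⊔ E.map g := by
        have h4 : N (i + 1) ≤ N i ⊔ Ideal.span {f ⟨i, hi⟩} := by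
          refine Ideal.span_le.2 ?_
          rintro _ ⟨j, hj, rfl⟩
          rcases Nat.lt_succ_iff_lt_or_eq.1 hj with hj | hj
          · exact Ideal.mem_sup_left (Ideal.subset_span ⟨j, hj, rfl⟩)
          · have : j = ⟨i, hi⟩ := Fin.ext hj
            rw [this]
            exact Ideal.mem_sup_right (Ideal.mem_span_singleton_self _)
        intro q hq
        obtain ⟨q1, hq1, q2, hq2, rfl⟩ := Submodule.mem_sup.1 (h4 hq)
        obtain ⟨r, rfl⟩ := Ideal.mem_span_singleton'.1 hq2
        have hr : r ∈ J.restrictScalars k ⊔ E := by rw [hE.sup_eq_top]; trivial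
        obtain ⟨r1, hr1, r2, hr2, rfl⟩ := Submodule.mem_sup.1 hr
        rw [add_mul, ← add_assoc]
        refine Submodule.add_mem_sup ?_ ⟨r2, hr2, ?_⟩
        · exact Ideal.add_mem _ hq1 (hJf _ hr1)
        · simp [g, mul_comm]
      calc _ ≤ Module.finrank k ↥((N i).restrictScalars k ⊔ E.map g) :=
            Submodule.finrank_mono hle
        _ ≤ _ + Module.finrank k (E.map g) := Submodule.finrank_add_le_finrank_add_finrank _ _
        _ ≤ i * Module.finrank k (Q ⧸ J) + Module.finrank k (Q ⧸ J) :=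
            add_le_add ih ((Submodule.finrank_map_le g E).trans hEr.le)
        _ = _ := by ring
  have htop : N h = ⊤ := by
    rw [Ideal.eq_top_iff_one, h3]
    exact Ideal.sum_mem _ fun j _ => Ideal.mul_mem_left _ _ (Ideal.subset_span ⟨j, j.2, rfl⟩)
  have := key h le_rfl
  rw [htop, Submodule.restrictScalars_top, finrank_top] at this
  exact this

theorem nil_pow {Q : Type*} [CommRing Q] (n : ℕ) (x y z : Q) (hx : x ^ n = 0) (hy : y ^ n = 0)
    (hz : z ^ 3 = -(x ^ 3 + y ^ 3)) : (Ideal.span {x, y, z} : Ideal Q) ^ (2 * n + 2) = ⊥ := by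
  set I : Ideal Q := Ideal.span {x, y} with hI
  set Z : Ideal Q := Ideal.span {z} with hZ
  have hm : (Ideal.span {x, y, z} : Ideal Q) = I ⊔ Z := by
    rw [hI, hZ, ← Ideal.span_union]
    congr 1
    ext; simp; tauto
  set m : Ideal Q := Ideal.span {x, y, z} with hmm
  have hIm : I ≤ m := hm ▸ le_sup_left
  have hZm : Z ≤ m := hm ▸ le_sup_right
  have hxI : x ∈ I := Ideal.subset_span (by simp)
  have hyI : y ∈ I := Ideal.subset_span (by simp)
  have hZ3 : Z ^ 3 ≤ I * m ^ 2 := by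
    rw [hZ, Ideal.span_singleton_pow, Ideal.span_singleton_le_iff_mem, hz]
    refine neg_mem (Ideal.add_mem _ ?_ ?_)
    · rw [pow_succ' x 2]
      exact Ideal.mul_mem_mul hxI (Ideal.pow_mem_pow (hIm hxI) 2)
    · rw [pow_succ' y 2]
      exact Ideal.mul_mem_mul hyI (Ideal.pow_mem_pow (hIm hyI) 2)
  have h3 : m ^ 3 ≤ I * m ^ 2 := by
    have e1 : m ^ 3 = I * m ^ 2 ⊔ Z * m ^ 2 := by
      rw [pow_succ' m 2]; nth_rewrite 1 [hm]; rw [Ideal.sup_mul]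
    have e2 : Z * m ^ 2 = I * (Z * m) ⊔ Z ^ 2 * m := by
      have : Z * m ^ 2 = m * (Z * m) := by ring
      rw [this]; nth_rewrite 1 [hm]; rw [Ideal.sup_mul]
      congr 1
      ring
    have e3 : Z ^ 2 * m = I * (Z * Z) ⊔ Z ^ 3 := by
      rw [mul_comm]; nth_rewrite 1 [hm]; rw [Ideal.sup_mul]
      congr 1 <;> ring
    rw [e1, e2, e3]
    refine sup_le le_rfl (sup_le ?_ (sup_le ?_ hZ3))
    · rw [pow_two]
      exact Ideal.mul_mono le_rfl (Ideal.mul_mono hZm le_rfl)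
    · rw [pow_two]
      exact Ideal.mul_mono le_rfl (Ideal.mul_mono hZm hZm)
  have hk : ∀ j, m ^ (j + 2) ≤ I ^ j * m ^ 2 := by
    intro j
    induction j with
    | zero => simp
    | succ j ih =>
      calc m ^ (j + 1 + 2) = m * m ^ (j + 2) := by ring
        _ ≤ m * (I ^ j * m ^ 2) := Ideal.mul_mono le_rfl ih
        _ = I ^ j * m ^ 3 := by ring
        _ ≤ I ^ j * (I * m ^ 2) := Ideal.mul_mono le_rfl h3
        _ = _ := by ring
  rw [eq_bot_iff]
  refine (hk (2 * n)).trans (Ideal.mul_le_left.trans ?_)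
  have : I = Ideal.span {x} ⊔ Ideal.span {y} := by
    rw [hI, ← Ideal.span_union]; congr 1
  rw [this, two_mul]
  refine (Ideal.sup_pow_add_le_pow_sup_pow).trans ?_
  rw [Ideal.span_singleton_pow, Ideal.span_singleton_pow, hx, hy]
  simp

theorem exists_uv {Q : Type*} [CommRing Q] (p : ℕ) (hp : p % 3 = 2) (x y z : Q)
    (hz : z ^ 3 = -(x ^ 3 + y ^ 3)) :
    ∃ u v : Q, u ∈ (Ideal.span {x, y, z} : Ideal Q) ^ p ∧ v ∈ (Ideal.span {x, y, z} : Ideal Q) ^ p ∧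
      (z ^ p) ^ 2 = u * x ^ p + v * y ^ p := by
  set m : Ideal Q := Ideal.span {x, y, z} with hmm
  have hx : x ∈ m := Ideal.subset_span (by simp)
  have hy : y ∈ m := Ideal.subset_span (by simp)
  have hzm : z ∈ m := Ideal.subset_span (by simp)
  obtain ⟨r, rfl⟩ : ∃ r, p = 3 * r + 2 := ⟨p / 3, by omega⟩
  set p := 3 * r + 2 with hpp
  have hmem : (z ^ p) ^ 2 ∈ m ^ p * Ideal.span {x ^ p} ⊔ m ^ p * Ideal.span {y ^ p} := by
    have e : (z ^ p) ^ 2 = (-1) ^ (2 * r + 1) * ((x ^ 3 + y ^ 3) ^ (2 * r + 1) * z) := by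
      have : (z ^ p) ^ 2 = (z ^ 3) ^ (2 * r + 1) * z := by rw [hpp]; ring
      rw [this, hz, neg_pow]; ring
    rw [e, add_pow, Finset.sum_mul]
    refine Ideal.mul_mem_left _ _ (Ideal.sum_mem _ fun i hi => ?_)
    have hi' : i ≤ 2 * r + 1 := by simpa [Nat.lt_succ_iff] using hi
    by_cases h : r + 1 ≤ i
    · refine Ideal.mem_sup_left ?_
      obtain ⟨j, hj⟩ : ∃ j, 3 * i = p + j := ⟨3 * i - p, by omega⟩
      have e2 : (x ^ 3) ^ i * (y ^ 3) ^ (2 * r + 1 - i) * ((2 * r + 1).choose i : Q) * z =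
          (((2 * r + 1).choose i : Q) * (x ^ j * y ^ (3 * (2 * r + 1 - i)) * z ^ 1)) * x ^ p := by
        rw [← pow_mul, ← pow_mul, hj, pow_add]; ring
      rw [e2]
      refine Ideal.mul_mem_mul (Ideal.mul_mem_left _ _ ?_) (Ideal.mem_span_singleton_self _)
      have e3 : m ^ p = m ^ j * m ^ (3 * (2 * r + 1 - i)) * m ^ 1 := by
        rw [← pow_add, ← pow_add]; congr 1; omega
      rw [e3]
      exact Ideal.mul_mem_mul (Ideal.mul_mem_mul (Ideal.pow_mem_pow hx _) (Ideal.pow_mem_pow hy _))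
        (Ideal.pow_mem_pow hzm _)
    · refine Ideal.mem_sup_right ?_
      obtain ⟨j, hj⟩ : ∃ j, 3 * (2 * r + 1 - i) = p + j := ⟨3 * (2 * r + 1 - i) - p, by omega⟩
      have e2 : (x ^ 3) ^ i * (y ^ 3) ^ (2 * r + 1 - i) * ((2 * r + 1).choose i : Q) * z =
          (((2 * r + 1).choose i : Q) * (x ^ (3 * i) * y ^ j * z ^ 1)) * y ^ p := by
        rw [← pow_mul, ← pow_mul, hj, pow_add]; ring
      rw [e2]
      refine Ideal.mul_mem_mul (Ideal.mul_mem_left _ _ ?_) (Ideal.mem_span_singleton_self _)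
      have e3 : m ^ p = m ^ (3 * i) * m ^ j * m ^ 1 := by
        rw [← pow_add, ← pow_add]; congr 1; omega
      rw [e3]
      exact Ideal.mul_mem_mul (Ideal.mul_mem_mul (Ideal.pow_mem_pow hx _) (Ideal.pow_mem_pow hy _))
        (Ideal.pow_mem_pow hzm _)
  obtain ⟨s, hs, w, hw, hsw⟩ := Submodule.mem_sup.1 hmem
  obtain ⟨u, hu, rfl⟩ := Ideal.mem_mul_span_singleton.1 hs
  obtain ⟨v, hv, rfl⟩ := Ideal.mem_mul_span_singleton.1 hw
  exact ⟨u, v, hu, hv, hsw.symm⟩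


end QS

namespace QS

/-- The integral defining ideal of the Artinian truncation. -/
noncomputable def Kt (t : ℕ) : Ideal (MvPolynomial (Fin 5) ℤ) :=
  Ideal.span {MvPolynomial.X 0 ^ t, MvPolynomial.X 1 ^ t,
    MvPolynomial.X 0 ^ 3 + MvPolynomial.X 1 ^ 3 + MvPolynomial.X 2 ^ 3,
    MvPolynomial.X 2 ^ 2 - MvPolynomial.X 3 * MvPolynomial.X 0 -
      MvPolynomial.X 4 * MvPolynomial.X 1} ⊔
  Ideal.span (Set.range MvPolynomial.X) ^ (2 * t + 1)

theorem eqSys_charp {D k : Type*} [CommRing D] [Field k] (ψ : D →+* k) (p : ℕ) (hp : p.Prime)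
    [CharP k p] (hp3 : p % 3 = 2) (t h N : ℕ) (ht : 0 < t) (G : Fin N → MvPolynomial (Fin 5) ℤ)
    (hG : ∀ l, G l ∈ Kt t)
    (H : EqSys h N (MvPolynomial.X 0 : MvPolynomial (Fin 5) D) (MvPolynomial.X 1)
      (fun l => MvPolynomial.map (Int.castRingHom D) (G l))) : t ^ 2 ≤ h := by
  have : Fact p.Prime := ⟨hp⟩
  set n := p * t with hn
  have hn0 : 0 < n := Nat.mul_pos hp.pos ht
  set Q := Tow k n with hQ
  have : Module.Finite k Q := tow_finite k n
  have hnt : Nontrivial Q := by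
    by_contra hc
    rw [not_nontrivial_iff_subsingleton] at hc
    have h1 := tow_finrank k n hn0
    rw [Module.finrank_zero_of_subsingleton] at h1
    have : 0 < n ^ 2 := by positivity
    omega
  have : CharP Q p := charP_of_injective_algebraMap (algebraMap k Q).injective p
  set x : Q := Tx k n
  set y : Q := Ty k n
  set z : Q := Tz k n
  have hx : x ^ n = 0 := Tx_pow k n
  have hy : y ^ n = 0 := Ty_pow k n
  have hz : z ^ 3 = -(x ^ 3 + y ^ 3) := Tz_pow k n
  obtain ⟨u, v, hu, hv, huv⟩ := exists_uv p hp3 x y z hz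
  have hnil := nil_pow n x y z hx hy hz
  set m : Ideal Q := Ideal.span {x, y, z} with hm
  let Θ : MvPolynomial (Fin 5) D →+* Q :=
    MvPolynomial.eval₂Hom ((algebraMap k Q).comp ψ) ![x ^ p, y ^ p, z ^ p, u, v]
  have hΘ : ∀ i, Θ (MvPolynomial.X i) = ![x ^ p, y ^ p, z ^ p, u, v] i := fun i =>
    MvPolynomial.eval₂Hom_X' ..
  let Ψ : MvPolynomial (Fin 5) ℤ →+* Q := Θ.comp (MvPolynomial.map (Int.castRingHom D))
  have hΨ : ∀ i, Ψ (MvPolynomial.X i) = ![x ^ p, y ^ p, z ^ p, u, v] i := fun i => by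
    rw [← hΘ]; simp [Ψ]
  have h0 := hΨ 0
  have h1 := hΨ 1
  have h2 := hΨ 2
  have h3 := hΨ 3
  have h4 := hΨ 4
  simp only [Matrix.cons_val] at h0 h1 h2 h3 h4
  have hker : Kt t ≤ RingHom.ker Ψ := by
    refine sup_le (Ideal.span_le.2 ?_) ?_
    · rintro _ (rfl | rfl | rfl | rfl)
      · rw [SetLike.mem_coe, RingHom.mem_ker, map_pow, h0, ← pow_mul, hx]
      · rw [SetLike.mem_coe, RingHom.mem_ker, map_pow, h1, ← pow_mul, hy]
      · rw [SetLike.mem_coe, RingHom.mem_ker]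
        simp only [map_add, map_pow, h0, h1, h2]
        have : (x ^ 3 + y ^ 3 + z ^ 3) ^ p = 0 := by
          rw [hz, add_neg_cancel, zero_pow hp.ne_zero]
        rw [add_pow_char, add_pow_char] at this
        rw [← this]; ring
      · rw [SetLike.mem_coe, RingHom.mem_ker]
        simp only [map_sub, map_mul, map_pow, h0, h1, h2, h3, h4, huv]
        ring
    · have hmap : (Ideal.span (Set.range MvPolynomial.X) : Ideal (MvPolynomial (Fin 5) ℤ)).map Ψ
          ≤ m ^ p := by
        rw [Ideal.map_span, Ideal.span_le]
        rintro _ ⟨_, ⟨i, rfl⟩, rfl⟩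
        rw [SetLike.mem_coe, hΨ]
        have hxm : x ∈ m := Ideal.subset_span (by simp)
        have hym : y ∈ m := Ideal.subset_span (by simp)
        have hzm : z ∈ m := Ideal.subset_span (by simp)
        fin_cases i
        · exact Ideal.pow_mem_pow hxm p
        · exact Ideal.pow_mem_pow hym p
        · exact Ideal.pow_mem_pow hzm p
        · exact hu
        · exact hv
      intro q hq
      rw [RingHom.mem_ker, ← Ideal.mem_bot, ← hnil]
      have h5 := Ideal.mem_map_of_mem Ψ hq
      rw [Ideal.map_pow] at h5
      have h6 := Ideal.pow_right_mono hmap (2 * t + 1) h5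
      rw [← pow_mul] at h6
      refine Ideal.pow_le_pow_right ?_ h6
      have := hp.two_le
      rw [hn]
      nlinarith
  have HQ := H.map Θ
  rw [hΘ, hΘ] at HQ
  have hfin := finrank_le_of_eqSys (k := k) (fun l => hker (hG l)) HQ
  rw [tow_finrank k n hn0] at hfin
  have hq := tow_quot k n p hp.pos
  have h7 : 3 * n ^ 2 ≤ h * (3 * p ^ 2) := hfin.trans (Nat.mul_le_mul_left _ hq)
  have h8 : t ^ 2 * (3 * p ^ 2) ≤ h * (3 * p ^ 2) := by
    rw [hn] at h7
    calc _ = 3 * (p * t) ^ 2 := by ring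
      _ ≤ _ := h7
  have := hp.pos
  exact Nat.le_of_mul_le_mul_right h8 (by positivity)

/-- Descent of a system from `ℂ` to a finitely generated subring. -/
theorem eqSys_descend (h N : ℕ) (G : Fin N → MvPolynomial (Fin 5) ℤ)
    (H : EqSys h N (MvPolynomial.X 0 : MvPolynomial (Fin 5) ℂ) (MvPolynomial.X 1)
      (fun l => MvPolynomial.map (Int.castRingHom ℂ) (G l))) :
    ∃ D : Subalgebra ℤ ℂ, Algebra.FiniteType ℤ D ∧
      EqSys h N (MvPolynomial.X 0 : MvPolynomial (Fin 5) D) (MvPolynomial.X 1)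
      (fun l => MvPolynomial.map (Int.castRingHom D) (G l)) := by
  classical
  obtain ⟨f, c, α, β, γ, δ, e, h1, h2, h3⟩ := H
  let F : Set (MvPolynomial (Fin 5) ℂ) :=
    Set.range f ∪ (Set.range c ∪ (Set.range (fun q : Fin h × Fin h => α q.1 q.2)
    ∪ (Set.range (fun q : Fin h × Fin h => β q.1 q.2)
    ∪ (Set.range (fun q : Fin h × Fin N => γ q.1 q.2)
    ∪ (Set.range (fun q : Fin h × Fin N => δ q.1 q.2) ∪ Set.range e)))))
  have hF : F.Finite := Set.toFinite _
  let s : Finset ℂ := hF.toFinset.biUnion MvPolynomial.coeffs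
  let D : Subalgebra ℤ ℂ := Algebra.adjoin ℤ (s : Set ℂ)
  let ι : D →+* ℂ := D.val.toRingHom
  have hι : Function.Injective (MvPolynomial.map (σ := Fin 5) ι) :=
    MvPolynomial.map_injective _ Subtype.val_injective
  have hlift : ∀ q ∈ F, ∃ q' : MvPolynomial (Fin 5) D, MvPolynomial.map ι q' = q := by
    intro q hq
    have : q ∈ Set.range (MvPolynomial.map (σ := Fin 5) ι) := by
      rw [MvPolynomial.mem_range_map_iff_coeffs_subset]
      intro a ha
      have ha' : a ∈ D := Algebra.subset_adjoin (Finset.mem_coe.2 (Finset.mem_biUnion.2 ⟨q, hF.mem_toFinset.2 hq, ha⟩))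
      exact ⟨⟨a, ha'⟩, rfl⟩
    exact this
  choose f' hf' using fun i => hlift (f i) (Or.inl ⟨i, rfl⟩)
  choose c' hc' using fun i => hlift (c i) (Or.inr (Or.inl ⟨i, rfl⟩))
  choose α' hα' using fun i j => hlift (α i j) (Or.inr (Or.inr (Or.inl ⟨(i, j), rfl⟩)))
  choose β' hβ' using fun i j => hlift (β i j) (Or.inr (Or.inr (Or.inr (Or.inl ⟨(i, j), rfl⟩))))
  choose γ' hγ' using fun i j =>
    hlift (γ i j) (Or.inr (Or.inr (Or.inr (Or.inr (Or.inl ⟨(i, j), rfl⟩)))))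
  choose δ' hδ' using fun i j =>
    hlift (δ i j) (Or.inr (Or.inr (Or.inr (Or.inr (Or.inr (Or.inl ⟨(i, j), rfl⟩))))))
  choose e' he' using fun i =>
    hlift (e i) (Or.inr (Or.inr (Or.inr (Or.inr (Or.inr (Or.inr ⟨i, rfl⟩))))))
  have hGι : ∀ l, MvPolynomial.map ι (MvPolynomial.map (Int.castRingHom D) (G l)) =
      MvPolynomial.map (Int.castRingHom ℂ) (G l) := by
    intro l
    rw [MvPolynomial.map_map]
    congr 1
  refine ⟨D, (Subalgebra.fg_iff_finiteType D).1 ⟨s, rfl⟩, f', c', α', β', γ', δ', e',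
    fun i => hι ?_, fun i => hι ?_, hι ?_⟩
  · simp only [map_add, map_sum, map_mul, MvPolynomial.map_X, hf', hα', hγ', hGι]
    exact h1 i
  · simp only [map_add, map_sum, map_mul, MvPolynomial.map_X, hf', hβ', hδ', hGι]
    exact h2 i
  · simp only [map_add, map_sum, map_mul, map_one, hf', hc', he', hGι]
    exact h3

theorem eqSys_lower (t h N : ℕ) (ht : 0 < t) (G : Fin N → MvPolynomial (Fin 5) ℤ)
    (hG : ∀ l, G l ∈ Kt t)
    (H : EqSys h N (MvPolynomial.X 0 : MvPolynomial (Fin 5) ℂ) (MvPolynomial.X 1)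
      (fun l => MvPolynomial.map (Int.castRingHom ℂ) (G l))) : t ^ 2 ≤ h := by
  obtain ⟨D, hD, HD⟩ := eqSys_descend h N G H
  obtain ⟨p, hp, hp3, q, hq, hpq⟩ := exists_prime_two_mod_three D
  have hinj : Function.Injective (algebraMap (D ⧸ q) (FractionRing (D ⧸ q))) :=
    IsFractionRing.injective _ _
  have hchar : CharP (FractionRing (D ⧸ q)) p := by
    have h0 : ((p : ℕ) : FractionRing (D ⧸ q)) = 0 := by
      have : (Ideal.Quotient.mk q (p : D)) = 0 := Ideal.Quotient.eq_zero_iff_mem.2 hpq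
      rw [map_natCast] at this
      rw [← map_natCast (algebraMap (D ⧸ q) (FractionRing (D ⧸ q))), this, map_zero]
    exact (CharP.charP_iff_prime_eq_zero hp).2 h0
  exact eqSys_charp ((algebraMap (D ⧸ q) (FractionRing (D ⧸ q))).comp (Ideal.Quotient.mk q))
    p hp hp3 t h N ht G hG HD

/-- Lifting a system from a quotient. -/
theorem eqSys_lift {S : Type*} [CommRing S] (h N : ℕ) (a b : S) (G : Fin N → S) (K : Ideal S)
    (hK : K = Ideal.span (Set.range G)) (g : Fin 0 → S ⧸ K)
    (H : EqSys h 0 (Ideal.Quotient.mk K a) (Ideal.Quotient.mk K b) g) : EqSys h N a b G := by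
  obtain ⟨f, c, α, β, γ, δ, e, h1, h2, h3⟩ := H
  have hs : ∀ q : S ⧸ K, ∃ q', Ideal.Quotient.mk K q' = q := Ideal.Quotient.mk_surjective
  choose f' hf' using fun i => hs (f i)
  choose c' hc' using fun i => hs (c i)
  choose α' hα' using fun i j => hs (α i j)
  choose β' hβ' using fun i j => hs (β i j)
  have key : ∀ r s : S, Ideal.Quotient.mk K r = Ideal.Quotient.mk K s →
      ∃ w : Fin N → S, r = s + ∑ l, w l * G l := by
    intro r s hrs
    rw [Ideal.Quotient.mk_eq_mk_iff_sub_mem, hK, Ideal.mem_span_range_iff_exists_fun] at hrs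
    obtain ⟨w, hw⟩ := hrs
    exact ⟨w, by rw [hw]; ring⟩
  choose γ' hγ' using fun i => key (a * f' i) (∑ j ∈ Finset.Iio i, α' i j * f' j) (by
    simp only [map_mul, map_sum, hf', hα']
    simpa using h1 i)
  choose δ' hδ' using fun i => key (b * f' i) (∑ j ∈ Finset.Iio i, β' i j * f' j) (by
    simp only [map_mul, map_sum, hf', hβ']
    simpa using h2 i)
  obtain ⟨e', he'⟩ := key 1 (∑ j, c' j * f' j) (by
    simp only [map_mul, map_sum, hf', hc', map_one]
    simpa using h3)
  exact ⟨f', c', α', β', γ', δ', e', hγ', hδ', he'⟩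

/-- A filtration gives a system. -/
theorem eqSys_of_filtration {R : Type u} [CommRing R] (J I : Ideal R) (a b : R) (ha : a ∈ J)
    (hb : b ∈ J) (h : ℕ) (H : HasQLFiltration R J (R ⧸ I) h) (g : Fin 0 → R ⧸ I) :
    EqSys h 0 (Ideal.Quotient.mk I a) (Ideal.Quotient.mk I b) g := by
  obtain ⟨c, -, h0, hl, hc⟩ := H
  choose f hf using fun i => (hc i).1
  have hker := fun i => (hc i).2
  have hspan : ∀ i : Fin (h + 1), c i = Submodule.span R (f '' {j | j.castSucc < i}) := by
    intro i
    induction i using Fin.induction with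
    | zero => simp [h0]
    | succ i ih =>
      rw [hf, ih, ← Submodule.span_union]
      congr 1
      ext q
      constructor
      · rintro (⟨j, hj, rfl⟩ | rfl)
        · exact ⟨j, lt_trans hj (Fin.castSucc_lt_succ), rfl⟩
        · exact ⟨i, Fin.castSucc_lt_succ, rfl⟩
      · rintro ⟨j, hj, rfl⟩
        have hj : j.castSucc < i.succ := hj
        rcases lt_or_eq_of_le (Fin.castSucc_lt_succ_iff.1 hj) with hj | rfl
        · exact Or.inl ⟨j, hj, rfl⟩
        · exact Or.inr rfl
  have hsum : ∀ (i : Fin h) (q : R ⧸ I), q ∈ c i.castSucc →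
      ∃ α : Fin h → R ⧸ I, q = ∑ j ∈ Finset.Iio i, α j * f j := by
    intro i q hq
    have e : {j : Fin h | j.castSucc < i.castSucc} = (Finset.Iio i : Set (Fin h)) := by
      ext j; simp
    rw [hspan, e, Submodule.mem_span_image_finset_iff_exists_fun'] at hq
    obtain ⟨α, hα⟩ := hq
    exact ⟨fun j => Ideal.Quotient.mk I (α j), hα.symm⟩
  have hfm : ∀ i, f i ∈ c i.succ := fun i => by
    rw [hf]; exact Submodule.mem_sup_right (Submodule.mem_span_singleton_self _)
  choose α hα using fun i => hsum i _ (hker i a ha _ (hfm i))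
  choose β hβ using fun i => hsum i _ (hker i b hb _ (hfm i))
  have h1 : (1 : R ⧸ I) ∈ c (Fin.last h) := by rw [hl]; trivial
  have e : {j : Fin h | j.castSucc < Fin.last h} = (Finset.univ : Finset (Fin h)) := by
    ext j; simp [Fin.castSucc_lt_last]
  rw [hspan, e, Submodule.mem_span_image_finset_iff_exists_fun'] at h1
  obtain ⟨d, hd⟩ := h1
  refine ⟨f, fun j => Ideal.Quotient.mk I (d j), α, β, fun _ _ => 0, fun _ _ => 0, fun _ => 0,
    fun i => ?_, fun i => ?_, ?_⟩
  · simp only [Finset.univ_eq_empty, Finset.sum_empty, add_zero]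
    exact hα i
  · simp only [Finset.univ_eq_empty, Finset.sum_empty, add_zero]
    exact hβ i
  · simp only [Finset.univ_eq_empty, Finset.sum_empty, add_zero]
    exact hd.symm


end QS

namespace QS

/-- The truncation map from power series to the Artinian truncation. -/
theorem exists_trunc (t : ℕ) : ∃ τ : MvPowerSeries (Fin 5) ℂ →+*
    MvPolynomial (Fin 5) ℂ ⧸ (Kt t).map (MvPolynomial.map (Int.castRingHom ℂ)),
    ∀ i, τ (X i) = Ideal.Quotient.mk _ (MvPolynomial.X i) := by
  have hle : (MvPolynomial.idealOfVars (Fin 5) ℂ) ^ (2 * t + 1) ≤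
      (Kt t).map (MvPolynomial.map (Int.castRingHom ℂ)) := by
    rw [Kt, Ideal.map_sup, Ideal.map_pow, Ideal.map_span (s := Set.range _)]
    refine le_trans (Ideal.pow_right_mono ?_ _) le_sup_right
    rw [MvPolynomial.idealOfVars, Ideal.span_le]
    rintro _ ⟨i, rfl⟩
    exact Ideal.subset_span ⟨MvPolynomial.X i, ⟨i, rfl⟩, by simp⟩
  refine ⟨(Ideal.Quotient.factor hle).comp (truncTotalAlgHom (Fin 5) ℂ (2 * t + 1)).toRingHom,
    fun i => ?_⟩
  have h1 := (truncTotalAlgHom (Fin 5) ℂ (2 * t + 1)).commutes (MvPolynomial.X i)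
  have h2 : algebraMap (MvPolynomial (Fin 5) ℂ) (MvPowerSeries (Fin 5) ℂ) (MvPolynomial.X i) =
      X i := by
    simp [MvPowerSeries.algebraMap_apply']
  rw [h2] at h1
  change Ideal.Quotient.factor hle (truncTotalAlgHom (Fin 5) ℂ (2 * t + 1) (X i)) = _
  rw [h1]
  rfl

theorem filtration_lower (J : Ideal (MvPowerSeries (Fin 5) ℂ))
    (hJ : J = Ideal.span {X 0 ^ 3 + X 1 ^ 3 + X 2 ^ 3, X 2 ^ 2 - X 3 * X 0 - X 4 * X 1})
    (t h : ℕ) (ht : 0 < t) (I I' : Ideal (MvPowerSeries (Fin 5) ℂ ⧸ J))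
    (hI : I = Ideal.span {Ideal.Quotient.mk J (X 0) ^ t, Ideal.Quotient.mk J (X 1) ^ t})
    (h0 : Ideal.Quotient.mk J (X 0) ∈ I') (h1 : Ideal.Quotient.mk J (X 1) ∈ I')
    (H : HasQLFiltration (MvPowerSeries (Fin 5) ℂ ⧸ J) I' ((MvPowerSeries (Fin 5) ℂ ⧸ J) ⧸ I) h) :
    t ^ 2 ≤ h := by
  have hex := exists_trunc t
  obtain ⟨KC, hKC⟩ : ∃ KC, KC = (Kt t).map (MvPolynomial.map (Int.castRingHom ℂ)) := ⟨_, rfl⟩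
  rw [← hKC] at hex
  obtain ⟨τ, hτ⟩ := hex
  obtain ⟨N, G, hG⟩ := Submodule.fg_iff_exists_fin_generating_family.1
    (IsNoetherian.noetherian (Kt t))
  have hGm : ∀ l, G l ∈ Kt t := fun l => hG ▸ Submodule.subset_span ⟨l, rfl⟩
  have hmem : ∀ q ∈ Kt t, Ideal.Quotient.mk KC (MvPolynomial.map (Int.castRingHom ℂ) q) = 0 :=
    fun q hq => Ideal.Quotient.eq_zero_iff_mem.2 (hKC ▸ Ideal.mem_map_of_mem _ hq)
  have hJτ : ∀ a ∈ J, τ a = 0 := by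
    intro a ha
    have : J ≤ RingHom.ker τ := by
      rw [hJ, Ideal.span_le]
      rintro _ (rfl | rfl)
      · have := hmem (MvPolynomial.X 0 ^ 3 + MvPolynomial.X 1 ^ 3 + MvPolynomial.X 2 ^ 3)
          (Ideal.mem_sup_left (Ideal.subset_span (by simp)))
        rw [SetLike.mem_coe, RingHom.mem_ker]
        simpa [hτ] using this
      · have := hmem (MvPolynomial.X 2 ^ 2 - MvPolynomial.X 3 * MvPolynomial.X 0 -
            MvPolynomial.X 4 * MvPolynomial.X 1)
          (Ideal.mem_sup_left (Ideal.subset_span (by simp)))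
        rw [SetLike.mem_coe, RingHom.mem_ker]
        simpa [hτ] using this
    exact this ha
  let τ1 : (MvPowerSeries (Fin 5) ℂ ⧸ J) →+* MvPolynomial (Fin 5) ℂ ⧸ KC := Ideal.Quotient.lift J τ hJτ
  have hτ1 : ∀ a, τ1 (Ideal.Quotient.mk J a) = τ a := fun a => Ideal.Quotient.lift_mk ..
  have hIτ : ∀ a ∈ I, τ1 a = 0 := by
    intro a ha
    have : I ≤ RingHom.ker τ1 := by
      rw [hI, Ideal.span_le]
      rintro _ (rfl | rfl)
      · have := hmem (MvPolynomial.X 0 ^ t) (Ideal.mem_sup_left (Ideal.subset_span (by simp)))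
        rw [SetLike.mem_coe, RingHom.mem_ker]
        simpa [hτ, hτ1] using this
      · have := hmem (MvPolynomial.X 1 ^ t) (Ideal.mem_sup_left (Ideal.subset_span (by simp)))
        rw [SetLike.mem_coe, RingHom.mem_ker]
        simpa [hτ, hτ1] using this
    exact this ha
  let τ2 := Ideal.Quotient.lift I τ1 hIτ
  have H1 := (eqSys_of_filtration I' I _ _ h0 h1 h H (fun _ => 0)).map τ2
  have e0 : τ2 (Ideal.Quotient.mk I (Ideal.Quotient.mk J (X 0))) =
      Ideal.Quotient.mk KC (MvPolynomial.X 0) := by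
    rw [← hτ, ← hτ1]; exact Ideal.Quotient.lift_mk ..
  have e1 : τ2 (Ideal.Quotient.mk I (Ideal.Quotient.mk J (X 1))) =
      Ideal.Quotient.mk KC (MvPolynomial.X 1) := by
    rw [← hτ, ← hτ1]; exact Ideal.Quotient.lift_mk ..
  rw [e0, e1] at H1
  refine eqSys_lower t h N ht G hGm (eqSys_lift h N _ _ _ KC ?_ _ H1)
  rw [hKC, ← hG]
  change Ideal.map _ (Ideal.span _) = _
  rw [Ideal.map_span, ← Set.range_comp]
  rfl


end QS

/-- Let `R = ℂ[[x,y,z,u,v]]/(x³+y³+z³, z²−ux−vy)`. Then `x, y`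
is a Q-sequence in `R`, but the superheight of `(x,y)R` is `1`: in every Noetherian
`R`-algebra `S` in which `(x,y)S` is proper, the height of `(x,y)S` is at most `1`. -/
theorem forcingAlgebra_cubic_QSequence_superheight_one :
    let x : MvPowerSeries (Fin 5) ℂ := X 0
    let y : MvPowerSeries (Fin 5) ℂ := X 1
    let z : MvPowerSeries (Fin 5) ℂ := X 2
    let u : MvPowerSeries (Fin 5) ℂ := X 3
    let v : MvPowerSeries (Fin 5) ℂ := X 4
    let J : Ideal (MvPowerSeries (Fin 5) ℂ) := Ideal.span
      {x ^ 3 + y ^ 3 + z ^ 3, z ^ 2 - u * x - v * y}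
    let R := MvPowerSeries (Fin 5) ℂ ⧸ J
    let xR : R := Ideal.Quotient.mk J x
    let yR : R := Ideal.Quotient.mk J y
    IsQSequence ![xR, yR] ∧
    ∀ (S : Type) [CommRing S] [IsNoetherianRing S] [Algebra R S],
      Ideal.span {algebraMap R S xR, algebraMap R S yR} ≠ ⊤ →
      idealHeight S (Ideal.span {algebraMap R S xR, algebraMap R S yR}) ≤ 1 := by
  intro x y z u v J R xR yR
  refine ⟨⟨?_, ?_⟩, ?_⟩
  · intro htop
    have hJ : ∀ a ∈ J, constantCoeff (σ := Fin 5) (R := ℂ) a = 0 := by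
      intro a ha
      have : J ≤ RingHom.ker (constantCoeff (σ := Fin 5) (R := ℂ)) := by
        refine Ideal.span_le.2 ?_
        rintro _ (rfl | rfl)
        · simp [x, y, z]
        · simp [x, y, z, u, v]
      exact this ha
    let ε : R →+* ℂ := Ideal.Quotient.lift J constantCoeff hJ
    have hle : Ideal.span (Set.range ![xR, yR]) ≤ RingHom.ker ε := by
      refine Ideal.span_le.2 ?_
      rintro _ ⟨i, rfl⟩
      rw [SetLike.mem_coe, RingHom.mem_ker]
      fin_cases i
      · change ε (Ideal.Quotient.mk J x) = 0
        rw [Ideal.Quotient.lift_mk]; simp [x]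
      · change ε (Ideal.Quotient.mk J y) = 0
        rw [Ideal.Quotient.lift_mk]; simp [y]
    rw [htop] at hle
    have h1 : (1 : R) ∈ RingHom.ker ε := hle trivial
    rw [RingHom.mem_ker, map_one] at h1
    exact one_ne_zero h1
  · intro t ht
    refine le_sInf ?_
    rintro _ ⟨h, rfl, H⟩
    have h0 : xR ∈ Ideal.span (Set.range ![xR, yR]) := Ideal.subset_span ⟨0, rfl⟩
    have h1 : yR ∈ Ideal.span (Set.range ![xR, yR]) := Ideal.subset_span ⟨1, rfl⟩
    have := QS.filtration_lower J rfl t h ht _ _ ?_ h0 h1 H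
    · exact_mod_cast this
    · congr 1
      ext q
      simp [Fin.exists_fin_two, eq_comm, xR, yR, x, y]
  · intro S _ _ _ hne
    have h1 : algebraMap R S (Ideal.Quotient.mk J (x ^ 3 + y ^ 3 + z ^ 3)) = 0 := by
      rw [Ideal.Quotient.eq_zero_iff_mem.2 (Ideal.subset_span (by simp)), map_zero]
    have h2 : algebraMap R S (Ideal.Quotient.mk J (z ^ 2 - u * x - v * y)) = 0 := by
      rw [Ideal.Quotient.eq_zero_iff_mem.2 (Ideal.subset_span (by simp)), map_zero]
    simp only [map_add, map_sub, map_mul, map_pow] at h1 h2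
    refine QS.global_height (((algebraMap R S).comp (Ideal.Quotient.mk J)).comp
      (MvPowerSeries.C (σ := Fin 5) (R := ℂ))) _ _ (algebraMap R S (Ideal.Quotient.mk J z))
      (algebraMap R S (Ideal.Quotient.mk J u)) (algebraMap R S (Ideal.Quotient.mk J v)) ?_ ?_ hne
    · linear_combination h1
    · linear_combination h2
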